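/- Let a_0,…,a_n be positive integers with gcd(a_0,…,a_n) = 1 and a_i ≥ 2 for all i. Then F(a_0,…,a_n) ≤ δ(d;a) for every regular pair (d;a) = (d_1,…,d_c; a_0,…,a_n) with these weights such that c ≤ 3 and n ≥ c. -/

import Mathlib

/-!
Two ingredients give the bound.

*Gluing.* If the Frobenius number is bounded by `B₁` among the multiples of `g₁` and by `B₂` among
the multiples of `g₂`, then it is bounded by `B₁ + B₂ + lcm g₁ g₂` among the multiples of
`gcd g₁ g₂` (`rep_glue`). Adjoining weights one at a time, or gluing two pairs of weights, bounds
the Frobenius number of four weights by a sum of three lcms minus the sum of the weights. It is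
therefore enough that some ordering or pairing has lcms whose sum is at most the sum of the three
degrees. If three weights divide distinct degrees, each lcm can be made to divide its own degree.
Otherwise Hall's theorem says which degrees are hit by few weights, and several orderings and
pairings are compared, using that proper divisors of a degree are so small that two or three of them
fit into it (`Reg.frobBound`).
Fewer than three degrees are handled by adjoining a weight as both weight and degree
(`mem_of_card_eq`).

*Removing weights.* Regularity says that every `g > 1` divides at most as many weights as degrees
(`IsHRegularOn.countReg`). A weight equal to a degree may be cancelled against it. If no such pair
exists and the weights outnumber the degrees by at least two, some weight can be discarded, with one
or two degrees divided by primes, so that the counts still hold and the amplitude does not increase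
(`CountReg.exists_removal`). Induction on the number of weights then reduces to the first part
(`CountReg.mem_of_delta_lt`); no coprimality is assumed there since it follows from the counts.
-/

open Finset

/-- The amplitude `δ` of the (sub)pair given by the degrees `d` indexed by `D`
and the weights `a` indexed by `A`. -/
def deltaOn {ι κ : Type*} (D : Finset ι) (d : ι → ℕ) (A : Finset κ) (a : κ → ℕ) : ℤ :=
  (∑ j ∈ D, (d j : ℤ)) - ∑ i ∈ A, (a i : ℤ)

/-- The amplitude of a full pair `(d;a)`. -/
def deltaPair {ι κ : Type*} [Fintype ι] [Fintype κ] (d : ι → ℕ) (a : κ → ℕ) : ℤ :=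
  deltaOn univ d univ a

/-- `h`-regularity of the (sub)pair given by the degrees `d` indexed by `D` and the
weights `a` indexed by `A`: for every nonempty subset `I ⊆ A` of the weight indices with
`a_I := gcd_{i ∈ I} a i > 1`, either there are `|I|` pairwise distinct degree indices
`p ∈ D` with `a_I ∣ d p`, or `a_I ∣ h`. -/
def IsHRegularOn {ι κ : Type*} (h : ℕ) (D : Finset ι) (d : ι → ℕ)
    (A : Finset κ) (a : κ → ℕ) : Prop :=
  ∀ I : Finset κ, I ⊆ A → I.Nonempty → 1 < I.gcd a →
    (∃ P : Finset ι, P ⊆ D ∧ P.card = I.card ∧ ∀ j ∈ P, I.gcd a ∣ d j) ∨ I.gcd a ∣ h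

/-- `h`-regularity of a full pair `(d;a)`. -/
def IsHRegularPair {ι κ : Type*} [Fintype ι] [Fintype κ] (h : ℕ) (d : ι → ℕ)
    (a : κ → ℕ) : Prop :=
  IsHRegularOn h univ d univ a

/-- The generalised `1/h`-Frobenius number `F^h` of the weights indexed by `A`.
Letting `g` be the gcd of the weights, this is the largest integer `z` divisible by
`lcm g h` that is not a nonnegative integral combination of the weights; this agrees
with the renormalised definition `F^h = g * F^{h / gcd (g,h)} (a/g)`.  For `g = 1`
it is the largest multiple of `h` that is not a nonnegative integral combination of
the weights (so it equals `-h` if every positive multiple of `h` is such a combination),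
and `frobOn 1 A a` is the ordinary Frobenius number `F` (so `F = -1` if some weight
equals `1`). -/
noncomputable def frobOn {κ : Type*} (h : ℕ) (A : Finset κ) (a : κ → ℕ) : ℤ :=
  sSup {z : ℤ | ((Nat.lcm (A.gcd a) h : ℕ) : ℤ) ∣ z ∧
    ¬ ∃ x : κ → ℕ, ((∑ i ∈ A, x i * a i : ℕ) : ℤ) = z}

/-- The generalised `1/h`-Frobenius number `F^h` of a full tuple of weights. -/
noncomputable def frobNum {κ : Type*} [Fintype κ] (h : ℕ) (a : κ → ℕ) : ℤ :=
  frobOn h univ a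

/-! ### Divisibility lattice -/

/-- Distributivity of `gcd` over `lcm`, in the form in which it is used throughout. -/
theorem dvd_of_dvd_lcm {x b c m : ℕ} (h : x ∣ Nat.lcm b c) (hb : Nat.gcd x b ∣ m)
    (hc : Nat.gcd x c ∣ m) : x ∣ m := by
  rw [Nat.dvd_iff_prime_pow_dvd_dvd]
  intro p k hp hk
  have h1 : p ^ k ∣ b ∨ p ^ k ∣ c := by
    rcases Nat.eq_zero_or_pos b with rfl | hb0
    · simp
    rcases Nat.eq_zero_or_pos c with rfl | hc0
    · simp
    have h2 := hk.trans h
    rw [hp.pow_dvd_iff_le_factorization (Nat.lcm_ne_zero hb0.ne' hc0.ne'),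
      Nat.factorization_lcm hb0.ne' hc0.ne', Finsupp.sup_apply, le_sup_iff] at h2
    rwa [hp.pow_dvd_iff_le_factorization hb0.ne', hp.pow_dvd_iff_le_factorization hc0.ne']
  rcases h1 with h1 | h1
  · exact (Nat.dvd_gcd hk h1).trans hb
  · exact (Nat.dvd_gcd hk h1).trans hc

theorem two_mul_le {e x N : ℕ} (hN : 0 < N) (he : e ∣ N) (hx : x ∣ N) (h : ¬ x ∣ e) :
    2 * e ≤ N := by
  obtain ⟨k, rfl⟩ := he
  have hk0 : k ≠ 0 := by rintro rfl; simp at hN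
  have hk1 : k ≠ 1 := by rintro rfl; simp at hx; exact h hx
  have : 2 ≤ k := by omega
  nlinarith

/-- A strictly increasing chain `e`, `lcm e x`, `lcm (lcm e x) y` of divisors of `N` doubles twice. -/
theorem four_mul_le {e x y N : ℕ} (hN : 0 < N) (he : e ∣ N) (hx : x ∣ N) (hy : y ∣ N)
    (h : ¬ x ∣ e) (h' : ¬ y ∣ Nat.lcm e x) : 4 * e ≤ N := by
  have h1 := two_mul_le hN (Nat.lcm_dvd he hx) hy h'
  have h2 := two_mul_le (Nat.lcm_pos (Nat.pos_of_dvd_of_pos he hN) (Nat.pos_of_dvd_of_pos hx hN))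
    (Nat.dvd_lcm_left e x) (Nat.dvd_lcm_right e x) h
  omega

/-- Two divisors of `N` that do not divide each other fit together into `N`. -/
theorem add_le_of_not_dvd {x y N : ℕ} (hN : 0 < N) (hx : x ∣ N) (hy : y ∣ N)
    (h : ¬ x ∣ y) (h' : ¬ y ∣ x) : x + y ≤ N := by
  have h1 := two_mul_le hN hx hy h'
  have h2 := two_mul_le hN hy hx h
  omega

/-- If neither of `x`, `y` divides the lcm of `e` with the other one, then `lcm e x` and `lcm e y`
are distinct proper multiples of `e` and proper divisors of `N`. They are at least `2 * e`, at most
`N / 2`, and not both equal to `N / 2`; hence one of them is at most `N / 3`. -/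
theorem six_mul_le {e x y N : ℕ} (hN : 0 < N) (he : e ∣ N) (hx : x ∣ N) (hy : y ∣ N)
    (h : ¬ x ∣ Nat.lcm e y) (h' : ¬ y ∣ Nat.lcm e x) : 6 * e ≤ N := by
  have he0 := Nat.pos_of_dvd_of_pos he hN
  have hx0 := Nat.pos_of_dvd_of_pos hx hN
  have hy0 := Nat.pos_of_dvd_of_pos hy hN
  have hX := two_mul_le (Nat.lcm_pos he0 hx0) (Nat.dvd_lcm_left e x) (Nat.dvd_lcm_right e x)
    (fun hh => h (hh.trans (Nat.dvd_lcm_left e y)))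
  have hY := two_mul_le (Nat.lcm_pos he0 hy0) (Nat.dvd_lcm_left e y) (Nat.dvd_lcm_right e y)
    (fun hh => h' (hh.trans (Nat.dvd_lcm_left e x)))
  have hne : Nat.lcm e x ≠ Nat.lcm e y := fun hh => h (hh ▸ Nat.dvd_lcm_right e x)
  have hXN := Nat.lcm_dvd he hx
  have hYN := Nat.lcm_dvd he hy
  have hX2 := two_mul_le hN hXN hy h'
  have hY2 := two_mul_le hN hYN hx h
  generalize Nat.lcm e x = X at *
  generalize Nat.lcm e y = Y at *
  obtain ⟨s, rfl⟩ := hXN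
  obtain ⟨t, ht⟩ := hYN
  by_cases hs : 3 ≤ s
  · nlinarith
  by_cases ht3 : 3 ≤ t
  · nlinarith
  exfalso
  have h2 : 2 ≤ s := by
    by_contra hcon
    have : s ≤ 1 := by omega
    nlinarith
  have h3 : 2 ≤ t := by
    by_contra hcon
    have : t ≤ 1 := by omega
    nlinarith
  have : s = 2 := by omega
  have : t = 2 := by omega
  subst_vars
  omega

/-- Two distinct proper divisors of `N` are at most `N / 2` and `N / 3`, in some order. -/
theorem six_mul_add_le {x y N : ℕ} (hN : 0 < N) (hx : x ∣ N) (hy : y ∣ N)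
    (hxN : 2 * x ≤ N) (hyN : 2 * y ≤ N) (hne : x ≠ y) : 6 * (x + y) ≤ 5 * N := by
  obtain ⟨s, hs⟩ := hx
  obtain ⟨t, ht⟩ := hy
  have hx0 : 0 < x := Nat.pos_of_ne_zero (by rintro rfl; omega)
  have hy0 : 0 < y := Nat.pos_of_ne_zero (by rintro rfl; omega)
  by_cases h3 : 3 ≤ s
  · nlinarith
  by_cases h4 : 3 ≤ t
  · nlinarith
  exfalso
  have h2 : 2 ≤ s := by
    by_contra hcon
    have : s ≤ 1 := by omega
    nlinarith
  have h3 : 2 ≤ t := by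
    by_contra hcon
    have : t ≤ 1 := by omega
    nlinarith
  have : s = 2 := by omega
  have : t = 2 := by omega
  subst_vars
  omega

/-- If `y ≤ x` and the part of `g` in `x` also divides `y`, then enlarging `y` to `lcm y g` costs no
more than enlarging `x` to `lcm x g`: the factor by which `y` grows is at most that for `x`. -/
theorem add_lcm_le {x y g : ℕ} (hx : 0 < x) (hg : 0 < g)
    (h : Nat.gcd g x ∣ y) (hyx : y ≤ x) : x + Nat.lcm y g ≤ Nat.lcm x g + y := by
  have h1 : Nat.gcd g x ∣ Nat.gcd g y := Nat.dvd_gcd (Nat.gcd_dvd_left _ _) h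
  have h2 := Nat.gcd_mul_lcm g x
  have h3 := Nat.gcd_mul_lcm g y
  rw [Nat.lcm_comm] at h2 h3
  have p1 : 0 < Nat.gcd g x := Nat.gcd_pos_of_pos_left _ hg
  obtain ⟨r, hr⟩ := Nat.gcd_dvd_left g x
  obtain ⟨r', hr'⟩ := Nat.gcd_dvd_left g y
  have p2 : 0 < Nat.gcd g y := Nat.gcd_pos_of_pos_left _ hg
  have e1 : Nat.lcm x g = r * x := by
    apply Nat.eq_of_mul_eq_mul_left p1; rw [h2]; nth_rewrite 1 [hr]; ring
  have e2 : Nat.lcm y g = r' * y := by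
    apply Nat.eq_of_mul_eq_mul_left p2; rw [h3]; nth_rewrite 1 [hr']; ring
  have hle : r' ≤ r := by
    have : Nat.gcd g x ≤ Nat.gcd g y := Nat.le_of_dvd p2 h1
    by_contra hcon
    have : r < r' := by omega
    have : Nat.gcd g x * r < Nat.gcd g y * r' := by nlinarith
    omega
  have hr0 : 1 ≤ r := Nat.pos_of_ne_zero (by rintro rfl; simp at hr; omega)
  rw [e1, e2]
  obtain ⟨t, rfl⟩ := Nat.exists_eq_add_of_le hr0
  obtain ⟨w, rfl⟩ := Nat.exists_eq_add_of_le hyx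
  nlinarith [Nat.mul_le_mul_right y hle, Nat.zero_le (t * w)]

/-! ### Gluing numerical semigroups -/

/-- `RepFrom S g B`: every multiple of `g` exceeding `B` lies in the semigroup `S`. -/
def RepFrom (S : AddSubmonoid ℤ) (g : ℕ) (B : ℤ) : Prop :=
  ∀ z : ℤ, (g : ℤ) ∣ z → B < z → z ∈ S

/-- The multiples of `a` in the semigroup generated by `a` are the non-negative ones. The bound `-a`
is sharp, and it makes the bounds in `rep_glue` add up. -/
theorem rep_single {S : AddSubmonoid ℤ} {a : ℕ} (h : (a : ℤ) ∈ S) : RepFrom S a (-a) := by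
  rintro z ⟨k, rfl⟩ hz
  have hk : 0 ≤ k := by
    by_contra hcon
    have : k ≤ -1 := by omega
    nlinarith [Int.natCast_nonneg a]
  obtain ⟨n, rfl⟩ := Int.eq_ofNat_of_zero_le hk
  rw [mul_comm]
  simpa using S.nsmul_mem h n

/-- The gluing inequality: with Frobenius bounds taken among the multiples of `g₁` and of `g₂`, the
bound among the multiples of `gcd g₁ g₂` is their sum plus `lcm g₁ g₂`. -/
theorem rep_glue {S : AddSubmonoid ℤ} {g₁ g₂ : ℕ} {B₁ B₂ : ℤ} (h₁ : 0 < g₁) (h₂ : 0 < g₂)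
    (H₁ : RepFrom S g₁ B₁) (H₂ : RepFrom S g₂ B₂) :
    RepFrom S (Nat.gcd g₁ g₂) (B₁ + B₂ + Nat.lcm g₁ g₂) := by
  intro z hz hB
  -- Bézout gives `u ≡ 0 mod g₁` with `u ≡ z mod g₂`; then `u` is moved into `(B₁, B₁ + lcm]`.
  obtain ⟨u, hu1, hu2⟩ : ∃ u : ℤ, (g₁ : ℤ) ∣ u ∧ (g₂ : ℤ) ∣ z - u := by
    obtain ⟨k, rfl⟩ := hz
    refine ⟨g₁ * Nat.gcdA g₁ g₂ * k, ⟨_, mul_assoc _ _ _⟩, ⟨Nat.gcdB g₁ g₂ * k, ?_⟩⟩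
    rw [Nat.gcd_eq_gcd_ab]; ring
  set l : ℤ := ((Nat.lcm g₁ g₂ : ℕ) : ℤ) with hl
  have hl0 : 0 < l := by rw [hl]; exact_mod_cast Nat.lcm_pos h₁ h₂
  have hl1 : (g₁ : ℤ) ∣ l := by rw [hl]; exact_mod_cast Nat.dvd_lcm_left _ _
  have hl2 : (g₂ : ℤ) ∣ l := by rw [hl]; exact_mod_cast Nat.dvd_lcm_right _ _
  set t := (u - B₁ - 1) / l with ht
  have hm := Int.emod_add_mul_ediv (u - B₁ - 1) l
  have m0 := Int.emod_nonneg (u - B₁ - 1) hl0.ne'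
  have m1 := Int.emod_lt_of_pos (u - B₁ - 1) hl0
  rw [← ht] at hm
  have A1 : u - l * t ∈ S := H₁ _ (dvd_sub hu1 (hl1.mul_right _)) (by linarith)
  have A2 : z - (u - l * t) ∈ S := by
    refine H₂ _ ?_ (by linarith)
    have : z - (u - l * t) = (z - u) + l * t := by ring
    rw [this]
    exact dvd_add hu2 (hl2.mul_right _)
  simpa using S.add_mem A1 A2

/-! ### Four weights and three degrees -/

/-- The divisibility content of regularity for four weights and three degrees: a weight divides
some degree, the gcd of two weights divides two of the degrees, the gcd of three weights divides
all degrees, and the four weights are coprime. Weights equal to `1` are permitted. -/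
structure Reg (a : Fin 4 → ℕ) (d : Fin 3 → ℕ) : Prop where
  apos : ∀ i, 0 < a i
  dpos : ∀ j, 0 < d j
  home : ∀ i, ∃ j, a i ∣ d j
  pair : ∀ i i', i ≠ i' → ∀ j j', j ≠ j' → Nat.gcd (a i) (a i') ∣ d j ∨ Nat.gcd (a i) (a i') ∣ d j'
  triple : ∀ i i' i'', i ≠ i' → i ≠ i'' → i' ≠ i'' → ∀ k, k ∣ a i → k ∣ a i' → k ∣ a i'' →
    ∀ j, k ∣ d j
  quad : ∀ k, (∀ i, k ∣ a i) → k = 1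

/-- The Frobenius bound: integers exceeding the amplitude lie in every semigroup containing
the weights. -/
def FrobBound (a : Fin 4 → ℕ) (d : Fin 3 → ℕ) : Prop :=
  ∀ S : AddSubmonoid ℤ, (∀ i, (a i : ℤ) ∈ S) →
    ∀ z : ℤ, ((d 0 + d 1 + d 2 : ℕ) : ℤ) - (a 0 + a 1 + a 2 + a 3 : ℕ) < z → z ∈ S

theorem Reg.reindex {a : Fin 4 → ℕ} {d : Fin 3 → ℕ} (R : Reg a d) (σ : Equiv.Perm (Fin 4))
    (τ : Equiv.Perm (Fin 3)) : Reg (a ∘ σ) (d ∘ τ) where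
  apos i := R.apos _
  dpos j := R.dpos _
  home i := by
    obtain ⟨j, hj⟩ := R.home (σ i)
    exact ⟨τ.symm j, by simpa using hj⟩
  pair i i' h j j' h' := R.pair _ _ (σ.injective.ne h) _ _ (τ.injective.ne h')
  triple i i' i'' h h' h'' k x y z j := R.triple _ _ _ (σ.injective.ne h) (σ.injective.ne h')
    (σ.injective.ne h'') k x y z _
  quad k h := R.quad k fun i => by simpa using h (σ.symm i)

theorem FrobBound.reindex {a : Fin 4 → ℕ} {d : Fin 3 → ℕ} (σ : Equiv.Perm (Fin 4))
    (τ : Equiv.Perm (Fin 3)) (h : FrobBound (a ∘ σ) (d ∘ τ)) : FrobBound a d := by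
  intro S hS z hz
  refine h S (fun i => hS _) z ?_
  have h1 := Equiv.sum_comp σ a
  have h2 := Equiv.sum_comp τ d
  simp only [Fin.sum_univ_four, Fin.sum_univ_three] at h1 h2
  simp only [Function.comp_apply]
  rw [h1, h2]
  exact hz

theorem gcd_dvd_of_left {x y m : ℕ} (h : x ∣ m) : Nat.gcd x y ∣ m := (Nat.gcd_dvd_left x y).trans h

theorem gcd_dvd_of_right {x y m : ℕ} (h : y ∣ m) : Nat.gcd x y ∣ m :=
  (Nat.gcd_dvd_right x y).trans h

section
variable {a : Fin 4 → ℕ} {d : Fin 3 → ℕ}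

/-- Adjoining the weights one at a time in the order `i`, `j`, `k`, `l`, each step adds the lcm of
the new weight and the gcd of the previous ones. -/
theorem Reg.frobBound_of_chain (R : Reg a d) (i j k l : Fin 4)
    (hall : ∀ x : Fin 4, x = i ∨ x = j ∨ x = k ∨ x = l)
    (hsum : a i + a j + a k + a l = a 0 + a 1 + a 2 + a 3)
    (h : Nat.lcm (a i) (a j) + Nat.lcm (Nat.gcd (a i) (a j)) (a k) +
      Nat.lcm (Nat.gcd (Nat.gcd (a i) (a j)) (a k)) (a l) ≤ d 0 + d 1 + d 2) :
    FrobBound a d := by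
  intro S hS z hz
  have hij : 0 < Nat.gcd (a i) (a j) := Nat.gcd_pos_of_pos_left _ (R.apos i)
  have H := rep_glue (Nat.gcd_pos_of_pos_left _ hij) (R.apos l)
    (rep_glue hij (R.apos k) (rep_glue (R.apos i) (R.apos j) (rep_single (hS i))
    (rep_single (hS j))) (rep_single (hS k))) (rep_single (hS l))
  refine H z ?_ ?_
  · have : Nat.gcd (Nat.gcd (Nat.gcd (a i) (a j)) (a k)) (a l) = 1 := by
      apply R.quad
      intro x
      rcases hall x with rfl | rfl | rfl | rfl <;>
        solve_by_elim [gcd_dvd_of_left, gcd_dvd_of_right, dvd_refl]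
    rw [this]; simp
  · push_cast at hz ⊢
    have h' := (Nat.cast_le (α := ℤ)).2 h
    have hs' := congrArg (Nat.cast : ℕ → ℤ) hsum
    push_cast at h' hs'
    linarith

/-- Gluing the pair of weights `i`, `j` to the pair `k`, `l`. -/
theorem Reg.frobBound_of_glue (R : Reg a d) (i j k l : Fin 4)
    (hall : ∀ x : Fin 4, x = i ∨ x = j ∨ x = k ∨ x = l)
    (hsum : a i + a j + a k + a l = a 0 + a 1 + a 2 + a 3)
    (h : Nat.lcm (a i) (a j) + Nat.lcm (a k) (a l) +
      Nat.lcm (Nat.gcd (a i) (a j)) (Nat.gcd (a k) (a l)) ≤ d 0 + d 1 + d 2) :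
    FrobBound a d := by
  intro S hS z hz
  have H := rep_glue (Nat.gcd_pos_of_pos_left _ (R.apos i)) (Nat.gcd_pos_of_pos_left _ (R.apos k))
    (rep_glue (R.apos i) (R.apos j) (rep_single (hS i)) (rep_single (hS j)))
    (rep_glue (R.apos k) (R.apos l) (rep_single (hS k)) (rep_single (hS l)))
  refine H z ?_ ?_
  · have : Nat.gcd (Nat.gcd (a i) (a j)) (Nat.gcd (a k) (a l)) = 1 := by
      apply R.quad
      intro x
      rcases hall x with rfl | rfl | rfl | rfl <;>
        solve_by_elim [gcd_dvd_of_left, gcd_dvd_of_right, dvd_refl]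
    rw [this]; simp
  · push_cast at hz ⊢
    have h' := (Nat.cast_le (α := ℤ)).2 h
    have hs' := congrArg (Nat.cast : ℕ → ℤ) hsum
    push_cast at h' hs'
    linarith

/-- The condition on three weights, with the divisibilities discharged automatically. -/
theorem Reg.tri (R : Reg a d) (i i' i'' : Fin 4) (j : Fin 3) {k : ℕ}
    (hi : i ≠ i' ∧ i ≠ i'' ∧ i' ≠ i'' := by decide)
    (h : k ∣ a i ∧ k ∣ a i' ∧ k ∣ a i'' := by
      refine ⟨?_, ?_, ?_⟩ <;> solve_by_elim [gcd_dvd_of_left, gcd_dvd_of_right, dvd_refl]) :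
    k ∣ d j :=
  R.triple i i' i'' hi.1 hi.2.1 hi.2.2 k h.1 h.2.1 h.2.2 j

theorem Reg.coprime_of_dvd (R : Reg a d) (k : ℕ)
    (h : k ∣ a 0 ∧ k ∣ a 1 ∧ k ∣ a 2 ∧ k ∣ a 3 := by
      refine ⟨?_, ?_, ?_, ?_⟩ <;> solve_by_elim [gcd_dvd_of_left, gcd_dvd_of_right, dvd_refl]) :
    k = 1 :=
  R.quad k fun i => by fin_cases i <;> simp [h]

/-- The case where three weights divide distinct degrees; the remaining weight `0` shares a degree
with one of them. In a suitable order, the three lcms of the chain divide distinct degrees. -/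
theorem Reg.frobBound_of_matching (R : Reg a d) (h0 : a 0 ∣ d 0) (h1 : a 1 ∣ d 0) (h2 : a 2 ∣ d 1)
    (h3 : a 3 ∣ d 2) : FrobBound a d := by
  have H1 := Nat.le_of_dvd (R.dpos 0) (Nat.lcm_dvd h0 h1)
  rcases R.pair 0 1 (by decide) 1 2 (by decide) with h | h
  · refine R.frobBound_of_chain 0 1 2 3 (by decide) (by ring) ?_
    have H2 := Nat.le_of_dvd (R.dpos 1) (Nat.lcm_dvd h h2)
    have H3 : Nat.lcm (Nat.gcd (Nat.gcd (a 0) (a 1)) (a 2)) (a 3) ≤ d 2 :=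
      Nat.le_of_dvd (R.dpos 2) (Nat.lcm_dvd (R.tri 0 1 2 _) h3)
    omega
  · refine R.frobBound_of_chain 0 1 3 2 (by decide) (by ring) ?_
    have H2 := Nat.le_of_dvd (R.dpos 2) (Nat.lcm_dvd h h3)
    have H3 : Nat.lcm (Nat.gcd (Nat.gcd (a 0) (a 1)) (a 3)) (a 2) ≤ d 1 :=
      Nat.le_of_dvd (R.dpos 1) (Nat.lcm_dvd (R.tri 0 1 3 _) h2)
    omega

/-! ### Three weights dividing a single degree -/

/-- The rearrangement behind the gluing `{0, 3} ∪ {1, 2}`, in terms of the cofactors of the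
relevant gcds. -/
theorem glue_arith {A k m w ρ t : ℕ} (hρ : 1 ≤ ρ) (hmk : m ≤ k) (hA : ρ * w ≤ A)
    (hkw : t ≤ k * w) : A * m + k * w + ρ * t ≤ A * k + ρ * m * w + t := by
  obtain ⟨r, rfl⟩ := Nat.exists_eq_add_of_le hρ
  obtain ⟨s, rfl⟩ := Nat.exists_eq_add_of_le hmk
  nlinarith [Nat.mul_le_mul_right s hA, Nat.mul_le_mul_left r hkw]

/-- Three weights divide `d 0`, and one of them, `a 3`, does not divide the lcm of the other two.
Then one of the chains `1203`, `1230`, `2301` gives the bound, or else gluing `{0, 3}` and `{1, 2}`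
does. The chains fail only if `lcm (gcd (a 2) (a 3)) (a 0)` is small, and it is this inequality that
`glue_arith` turns into the estimate for the gluing. -/
theorem Reg.frobBound_of_star_aux (R : Reg a d) (h0 : a 0 ∣ d 1) (h1 : a 1 ∣ d 0) (h2 : a 2 ∣ d 0)
    (h3 : a 3 ∣ d 0) (n11 : ¬ a 1 ∣ d 1) (n12 : ¬ a 1 ∣ d 2) (n22 : ¬ a 2 ∣ d 2)
    (hlcm : ¬ a 3 ∣ Nat.lcm (a 1) (a 2)) : FrobBound a d := by
  rcases R.pair 1 2 (by decide) 1 2 (by decide) with h12 | h12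
  · refine R.frobBound_of_chain 1 2 0 3 (by decide) (by ring) ?_
    have H2 := Nat.le_of_dvd (R.dpos 1) (Nat.lcm_dvd h12 h0)
    have H13 : Nat.lcm (a 1) (a 2) + Nat.lcm (Nat.gcd (Nat.gcd (a 1) (a 2)) (a 0)) (a 3) ≤ d 0 := by
      refine add_le_of_not_dvd (R.dpos 0) (Nat.lcm_dvd h1 h2) (Nat.lcm_dvd (R.tri 1 2 0 _) h3) ?_ ?_
      · intro h
        have h' := (Nat.dvd_lcm_left _ _).trans h
        rcases R.pair 1 3 (by decide) 1 2 (by decide) with h13 | h13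
        · exact n11 (dvd_of_dvd_lcm h' (R.tri 1 2 0 _) h13)
        · exact n12 (dvd_of_dvd_lcm h' (R.tri 1 2 0 _) h13)
      · exact fun h => hlcm ((Nat.dvd_lcm_right _ _).trans h)
    omega
  by_cases h : Nat.lcm (a 1) (a 2) ∣ Nat.lcm (Nat.gcd (a 1) (a 2)) (a 3)
  swap
  · refine R.frobBound_of_chain 1 2 3 0 (by decide) (by ring) ?_
    have H3 : Nat.lcm (Nat.gcd (Nat.gcd (a 1) (a 2)) (a 3)) (a 0) ≤ d 1 :=
      Nat.le_of_dvd (R.dpos 1) (Nat.lcm_dvd (R.tri 1 2 3 _) h0)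
    have H12 := add_le_of_not_dvd (R.dpos 0) (Nat.lcm_dvd h1 h2)
      (Nat.lcm_dvd (gcd_dvd_of_left h1) h3) h
      fun h => hlcm ((Nat.dvd_lcm_right _ _).trans h)
    omega
  have j1 : a 1 ∣ Nat.lcm (Nat.gcd (a 1) (a 2)) (a 3) := (Nat.dvd_lcm_left _ _).trans h
  have j2 : a 2 ∣ Nat.lcm (Nat.gcd (a 1) (a 2)) (a 3) := (Nat.dvd_lcm_right _ _).trans h
  have k1 : a 1 ∣ Nat.lcm (Nat.gcd (a 1) (a 2)) (Nat.gcd (a 1) (a 3)) :=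
    dvd_of_dvd_lcm j1 ((Nat.gcd_dvd_right _ _).trans (Nat.dvd_lcm_left _ _)) (Nat.dvd_lcm_right _ _)
  have k2 : a 2 ∣ Nat.lcm (Nat.gcd (a 1) (a 2)) (Nat.gcd (a 2) (a 3)) :=
    dvd_of_dvd_lcm j2 ((Nat.gcd_dvd_right _ _).trans (Nat.dvd_lcm_left _ _)) (Nat.dvd_lcm_right _ _)
  have g13 : Nat.gcd (a 1) (a 3) ∣ d 1 :=
    (R.pair 1 3 (by decide) 1 2 (by decide)).resolve_right
      fun h' => n12 (k1.trans (Nat.lcm_dvd h12 h'))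
  have g23 : Nat.gcd (a 2) (a 3) ∣ d 1 :=
    (R.pair 2 3 (by decide) 1 2 (by decide)).resolve_right
      fun h' => n22 (k2.trans (Nat.lcm_dvd h12 h'))
  have p0 := R.apos 0
  have p1 := R.apos 1
  have p2 := R.apos 2
  have p3 := R.apos 3
  have p12 : 0 < Nat.gcd (a 1) (a 2) := Nat.gcd_pos_of_pos_left _ p1
  have p13 : 0 < Nat.gcd (a 1) (a 3) := Nat.gcd_pos_of_pos_left _ p1
  have p23 : 0 < Nat.gcd (a 2) (a 3) := Nat.gcd_pos_of_pos_left _ p2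
  have p03 : 0 < Nat.gcd (a 0) (a 3) := Nat.gcd_pos_of_pos_left _ p0
  -- `τ` is the part of `gcd (a 0) (a 3)` shared with a third weight, so that it divides `d 2`
  set τ := Nat.lcm (Nat.gcd (Nat.gcd (a 0) (a 3)) (a 1)) (Nat.gcd (Nat.gcd (a 0) (a 3)) (a 2)) with hτ
  have pτ : 0 < τ := Nat.lcm_pos (Nat.gcd_pos_of_pos_left _ p03) (Nat.gcd_pos_of_pos_left _ p03)
  have τd : τ ∣ d 2 := Nat.lcm_dvd (R.tri 0 3 1 _) (R.tri 0 3 2 _)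
  have τ03 : τ ∣ Nat.gcd (a 0) (a 3) := Nat.lcm_dvd (Nat.gcd_dvd_left _ _) (Nat.gcd_dvd_left _ _)
  have c12 : Nat.gcd (Nat.gcd (a 1) (a 2)) τ = 1 := by
    have : Nat.gcd (Nat.gcd (a 1) (a 2)) τ ∣ Nat.gcd (Nat.gcd (a 1) (a 2)) (Nat.gcd (a 0) (a 3)) :=
      Nat.gcd_dvd_gcd_of_dvd_right _ τ03
    exact Nat.eq_one_of_dvd_one (this.trans (R.coprime_of_dvd _).dvd)
  have y_eq : Nat.lcm (Nat.gcd (a 1) (a 2)) τ = Nat.gcd (a 1) (a 2) * τ :=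
    Nat.Coprime.lcm_eq_mul c12
  have yd : Nat.lcm (Nat.gcd (a 1) (a 2)) τ ≤ d 2 := Nat.le_of_dvd (R.dpos 2) (Nat.lcm_dvd h12 τd)
  by_cases hy : Nat.lcm (Nat.gcd (a 1) (a 2)) τ ≤ Nat.lcm (Nat.gcd (a 2) (a 3)) (a 0)
  · refine R.frobBound_of_chain 2 3 0 1 (by decide) (by ring) ?_
    have H1 := Nat.le_of_dvd (R.dpos 0) (Nat.lcm_dvd h2 h3)
    have H2 := add_lcm_le (g := Nat.gcd (a 1) (a 3)) (Nat.lcm_pos p23 p0) p13 (?_) hy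
    · have H3 : Nat.lcm (Nat.gcd (Nat.gcd (a 2) (a 3)) (a 0)) (a 1) ≤
          Nat.lcm (Nat.lcm (Nat.gcd (a 1) (a 2)) τ) (Nat.gcd (a 1) (a 3)) := by
        refine Nat.le_of_dvd (Nat.lcm_pos (Nat.lcm_pos p12 pτ) p13) (Nat.lcm_dvd ?_ ?_)
        · refine Dvd.dvd.trans ?_ (((Nat.dvd_lcm_right _ _).trans (Nat.dvd_lcm_right _ _)).trans
            (Nat.dvd_lcm_left _ _))
          refine Nat.dvd_gcd (Nat.dvd_gcd ?_ ?_) ?_ <;>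
          solve_by_elim [gcd_dvd_of_left, gcd_dvd_of_right, dvd_refl]
        · refine k1.trans (Nat.lcm_dvd ?_ (Nat.dvd_lcm_right _ _))
          exact (Nat.dvd_lcm_left _ _).trans (Nat.dvd_lcm_left _ _)
      have H4 := Nat.le_of_dvd (R.dpos 1) (Nat.lcm_dvd (Nat.lcm_dvd g23 h0) g13)
      omega
    · refine dvd_of_dvd_lcm (Nat.gcd_dvd_right _ _) ?_ ?_
      · refine Dvd.dvd.trans (Nat.dvd_gcd ?_ ?_) (Nat.dvd_lcm_left _ _) <;>
          solve_by_elim [gcd_dvd_of_left, gcd_dvd_of_right, dvd_refl]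
      · refine Dvd.dvd.trans (Nat.dvd_gcd (Nat.dvd_gcd ?_ ?_) ?_)
          ((Nat.dvd_lcm_left _ _).trans (Nat.dvd_lcm_right _ _)) <;>
          solve_by_elim [gcd_dvd_of_left, gcd_dvd_of_right, dvd_refl]
  -- The remaining case, where `{0, 3}` and `{1, 2}` are glued.
  refine R.frobBound_of_glue 0 3 1 2 (by decide) (by ring) ?_
  push Not at hy
  set w := Nat.lcm (Nat.gcd (a 1) (a 3)) (Nat.gcd (a 2) (a 3)) with hw
  have pw : 0 < w := Nat.lcm_pos p13 p23
  set G := Nat.gcd (Nat.gcd (a 1) (a 2)) (a 3) with hG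
  have pG : 0 < G := Nat.gcd_pos_of_pos_left _ p12
  obtain ⟨k, hk⟩ : G ∣ Nat.gcd (a 1) (a 2) := Nat.gcd_dvd_left _ _
  obtain ⟨ρ, hρ⟩ := τ03
  obtain ⟨m, hm⟩ := Nat.gcd_dvd_left (a 0) (a 3)
  have w3 : w ∣ a 3 := Nat.lcm_dvd (Nat.gcd_dvd_right _ _) (Nat.gcd_dvd_right _ _)
  have τw : τ ∣ w := by
    refine Nat.lcm_dvd (Dvd.dvd.trans ?_ (Nat.dvd_lcm_left _ _))
      (Dvd.dvd.trans ?_ (Nat.dvd_lcm_right _ _)) <;>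
    refine Nat.dvd_gcd ?_ ?_ <;>
    solve_by_elim [gcd_dvd_of_left, gcd_dvd_of_right, dvd_refl]
  -- `gcd (x, w)` divides `τ` as soon as `x` divides `a 0`
  have gw : ∀ x, x ∣ a 0 → Nat.gcd x w ∣ τ := by
    intro x hx
    refine dvd_of_dvd_lcm (Nat.gcd_dvd_right _ _) (Dvd.dvd.trans ?_ (Nat.dvd_lcm_left _ _))
      (Dvd.dvd.trans ?_ (Nat.dvd_lcm_right _ _)) <;>
    refine Nat.dvd_gcd (Nat.dvd_gcd ?_ ?_) ?_ <;>
    solve_by_elim [gcd_dvd_of_left, gcd_dvd_of_right, dvd_refl]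
  have G12w : Nat.gcd (Nat.gcd (a 1) (a 2)) w = G := by
    apply Nat.dvd_antisymm
    · exact Nat.dvd_gcd (Nat.gcd_dvd_left _ _) (gcd_dvd_of_right w3)
    · refine Nat.dvd_gcd (Nat.gcd_dvd_left _ _) (Dvd.dvd.trans ?_ (Nat.dvd_lcm_left _ _))
      refine Nat.dvd_gcd ?_ ?_ <;>
      solve_by_elim [gcd_dvd_of_left, gcd_dvd_of_right, dvd_refl]
  have L12w : Nat.lcm (Nat.gcd (a 1) (a 2)) w = k * w := by
    apply Nat.eq_of_mul_eq_mul_left pG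
    have := Nat.gcd_mul_lcm (Nat.gcd (a 1) (a 2)) w
    rw [G12w] at this
    rw [this, ← mul_assoc, ← hk]
  have E1 : Nat.lcm (a 0) (a 3) = a 3 * m := by
    apply Nat.eq_of_mul_eq_mul_left p03
    rw [Nat.gcd_mul_lcm]
    nth_rewrite 1 [hm]
    ring
  have E2 : Nat.lcm (a 1) (a 2) ≤ k * w := by
    rw [← L12w]
    refine Nat.le_of_dvd (Nat.lcm_pos p12 pw) (Nat.lcm_dvd (k1.trans ?_) (k2.trans ?_))
    · exact Nat.lcm_dvd_lcm_of_dvd_right _ (Nat.dvd_lcm_left _ _)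
    · exact Nat.lcm_dvd_lcm_of_dvd_right _ (Nat.dvd_lcm_right _ _)
  have E3 : Nat.lcm (Nat.gcd (a 0) (a 3)) (Nat.gcd (a 1) (a 2)) ≤
      ρ * (Nat.gcd (a 1) (a 2) * τ) := by
    refine (Nat.le_of_dvd (Nat.mul_pos p03 p12) (Nat.lcm_dvd_mul _ _)).trans_eq ?_
    rw [hρ]; ring
  have D0 : a 3 * k ≤ d 0 := by
    refine le_trans ?_ (Nat.le_of_dvd (R.dpos 0) (Nat.lcm_dvd
      (gcd_dvd_of_left (y := a 2) h1) h3))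
    refine (Nat.eq_of_mul_eq_mul_left pG ?_).le
    rw [hG, Nat.gcd_mul_lcm, ← hG]
    nth_rewrite 1 [hk]
    ring
  have D1 : ρ * m * w ≤ d 1 := by
    refine le_trans ?_ (Nat.le_of_dvd (R.dpos 1) (Nat.lcm_dvd h0 (Nat.lcm_dvd g13 g23)))
    refine le_of_mul_le_mul_left ?_ pτ
    calc τ * (ρ * m * w) = a 0 * w := by rw [hm, hρ]; ring
      _ = Nat.gcd (a 0) w * Nat.lcm (a 0) w := (Nat.gcd_mul_lcm _ _).symm
      _ ≤ _ := Nat.mul_le_mul_right _ (Nat.le_of_dvd pτ (gw _ dvd_rfl))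
  have D3 : ρ * w ≤ a 3 := by
    refine le_trans ?_ (Nat.le_of_dvd p3 (Nat.lcm_dvd (Nat.gcd_dvd_right (a 0) (a 3)) w3))
    refine le_of_mul_le_mul_left ?_ pτ
    calc τ * (ρ * w) = Nat.gcd (a 0) (a 3) * w := by rw [hρ]; ring
      _ = Nat.gcd (Nat.gcd (a 0) (a 3)) w * Nat.lcm (Nat.gcd (a 0) (a 3)) w :=
        (Nat.gcd_mul_lcm _ _).symm
      _ ≤ _ := Nat.mul_le_mul_right _ (Nat.le_of_dvd pτ (gw _ (Nat.gcd_dvd_left _ _)))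
  have D4 : Nat.gcd (a 1) (a 2) * τ ≤ k * w := by
    rw [← L12w, ← y_eq]
    exact Nat.le_of_dvd (Nat.lcm_pos p12 pw) (Nat.lcm_dvd_lcm_of_dvd_right _ τw)
  have hρ1 : 1 ≤ ρ := Nat.pos_of_ne_zero (by rintro rfl; simp at hρ; omega)
  have hmk : m ≤ k := by
    have c0 : Nat.gcd G (a 0) = 1 := R.coprime_of_dvd _
    have f1 : G * a 0 ≤ Nat.lcm (Nat.gcd (a 2) (a 3)) (a 0) := by
      rw [← Nat.Coprime.lcm_eq_mul c0]
      refine Nat.le_of_dvd (Nat.lcm_pos p23 p0) (Nat.lcm_dvd_lcm_of_dvd_left _ (Nat.dvd_gcd ?_ ?_)) <;>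
      solve_by_elim [gcd_dvd_of_left, gcd_dvd_of_right, dvd_refl]
    have y1 : Nat.gcd (a 1) (a 2) * τ ≤ Nat.gcd (a 1) (a 2) * Nat.gcd (a 0) (a 3) := by
      rw [hρ]; exact Nat.mul_le_mul_left _ (Nat.le_mul_of_pos_right _ hρ1)
    rw [y_eq] at hy
    have : G * a 0 ≤ Nat.gcd (a 1) (a 2) * Nat.gcd (a 0) (a 3) := by omega
    rw [hk] at this
    nth_rewrite 1 [hm] at this
    refine le_of_mul_le_mul_left ?_ (Nat.mul_pos pG p03)
    nlinarith
  have := glue_arith hρ1 hmk D3 D4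
  rw [y_eq] at yd
  omega

/-- The case where three weights divide `d 0` only, and the remaining one divides `d 1`. -/
theorem Reg.frobBound_of_star (R : Reg a d) (h0 : a 0 ∣ d 1) (h1 : a 1 ∣ d 0) (h2 : a 2 ∣ d 0)
    (h3 : a 3 ∣ d 0) (n11 : ¬ a 1 ∣ d 1) (n12 : ¬ a 1 ∣ d 2) (n21 : ¬ a 2 ∣ d 1) (n22 : ¬ a 2 ∣ d 2)
    (n31 : ¬ a 3 ∣ d 1) (n32 : ¬ a 3 ∣ d 2) : FrobBound a d := by
  by_cases l3 : a 3 ∣ Nat.lcm (a 1) (a 2)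
  swap
  · exact R.frobBound_of_star_aux h0 h1 h2 h3 n11 n12 n22 l3
  by_cases l1 : a 1 ∣ Nat.lcm (a 2) (a 3)
  swap
  · refine FrobBound.reindex (Equiv.swap 1 3) 1
      ((R.reindex (Equiv.swap 1 3) 1).frobBound_of_star_aux h0 h3 h2 h1 n31 n32 n22 ?_)
    rw [Nat.lcm_comm]; exact l1
  by_cases l2 : a 2 ∣ Nat.lcm (a 1) (a 3)
  swap
  · exact FrobBound.reindex (Equiv.swap 2 3) 1
      ((R.reindex (Equiv.swap 2 3) 1).frobBound_of_star_aux h0 h1 h3 h2 n11 n12 n32 l2)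
  -- Otherwise each of the three weights divides the lcm of the other two. Two of the three pairwise
  -- gcds divide the same of `d 1`, `d 2`, and then so does the weight common to them.
  exfalso
  have l1' := fun j x y => dvd_of_dvd_lcm (m := d j) l1 x y
  have l2' := fun j x y => dvd_of_dvd_lcm (m := d j) l2 x y
  have l3' := fun j x y => dvd_of_dvd_lcm (m := d j) l3 x y
  rw [Nat.gcd_comm (a 2) (a 1)] at l2'
  rw [Nat.gcd_comm (a 3) (a 1), Nat.gcd_comm (a 3) (a 2)] at l3'
  have q12 := R.pair 1 2 (by decide) 1 2 (by decide)
  have q13 := R.pair 1 3 (by decide) 1 2 (by decide)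
  have q23 := R.pair 2 3 (by decide) 1 2 (by decide)
  rcases q12 with q12 | q12 <;> rcases q13 with q13 | q13 <;> rcases q23 with q23 | q23 <;> tauto

/-! ### Two weights dividing each of two degrees -/

/-- If neither of the chains `0123` and `0132` gives the bound, then `a 2` and `a 3` divide each
other up to `gcd (a 0) (a 1)`, which pins down the degrees that they and their gcd divide. -/
theorem Reg.split_aux (R : Reg a d) (h0 : a 0 ∣ d 0) (h1 : a 1 ∣ d 0) (h2 : a 2 ∣ d 1)
    (h3 : a 3 ∣ d 1) (n2 : ¬ a 2 ∣ d 2)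
    (n01 : ¬ Nat.gcd (a 0) (a 1) ∣ d 2) :
    FrobBound a d ∨ (¬ Nat.gcd (a 2) (a 3) ∣ d 2 ∧ a 2 ∣ d 0 ∧ a 3 ∣ d 0) := by
  have g1 := (R.pair 0 1 (by decide) 1 2 (by decide)).resolve_right n01
  have H1 := Nat.le_of_dvd (R.dpos 0) (Nat.lcm_dvd h0 h1)
  by_cases l3 : a 3 ∣ Nat.lcm (Nat.gcd (a 0) (a 1)) (a 2)
  swap
  · refine .inl (R.frobBound_of_chain 0 1 2 3 (by decide) (by ring) ?_)
    have := add_le_of_not_dvd (R.dpos 1) (Nat.lcm_dvd g1 h2)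
      (Nat.lcm_dvd (R.tri 0 1 2 _ (k := Nat.gcd (Nat.gcd (a 0) (a 1)) (a 2))) h3)
      (fun h => n01 (dvd_of_dvd_lcm ((Nat.dvd_lcm_left _ _).trans h) (R.tri 0 1 2 _)
        (R.tri 0 1 3 _)))
      (fun h => l3 ((Nat.dvd_lcm_right _ _).trans h))
    omega
  by_cases l2 : a 2 ∣ Nat.lcm (Nat.gcd (a 0) (a 1)) (a 3)
  swap
  · refine .inl (R.frobBound_of_chain 0 1 3 2 (by decide) (by ring) ?_)
    have := add_le_of_not_dvd (R.dpos 1) (Nat.lcm_dvd g1 h3)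
      (Nat.lcm_dvd (R.tri 0 1 3 _ (k := Nat.gcd (Nat.gcd (a 0) (a 1)) (a 3))) h2)
      (fun h => n01 (dvd_of_dvd_lcm ((Nat.dvd_lcm_left _ _).trans h) (R.tri 0 1 3 _)
        (R.tri 0 1 2 _)))
      (fun h => l2 ((Nat.dvd_lcm_right _ _).trans h))
    omega
  right
  have n23 : ¬ Nat.gcd (a 2) (a 3) ∣ d 2 := fun h =>
    n2 (dvd_of_dvd_lcm l2 (R.tri 0 1 2 _) h)
  have g23 := (R.pair 2 3 (by decide) 0 2 (by decide)).resolve_right n23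
  refine ⟨n23, dvd_of_dvd_lcm l2 (R.tri 0 1 2 _) g23, dvd_of_dvd_lcm l3 (R.tri 0 1 3 _) ?_⟩
  rwa [Nat.gcd_comm]

/-- The case where two weights divide one degree, the other two divide another one, and no
weight divides the third one. -/
theorem Reg.frobBound_of_split (R : Reg a d) (n : ∀ i, ¬ a i ∣ d 2) (h0 : a 0 ∣ d 0)
    (h1 : a 1 ∣ d 0) (h2 : a 2 ∣ d 1) (h3 : a 3 ∣ d 1) : FrobBound a d := by
  by_cases h01 : Nat.gcd (a 0) (a 1) ∣ d 2 ∧ Nat.gcd (a 2) (a 3) ∣ d 2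
  · refine R.frobBound_of_glue 0 1 2 3 (by decide) (by ring) ?_
    have H1 := Nat.le_of_dvd (R.dpos 0) (Nat.lcm_dvd h0 h1)
    have H2 := Nat.le_of_dvd (R.dpos 1) (Nat.lcm_dvd h2 h3)
    have H3 := Nat.le_of_dvd (R.dpos 2) (Nat.lcm_dvd h01.1 h01.2)
    omega
  have A := R.split_aux h0 h1 h2 h3 (n _)
  have B : ¬ Nat.gcd (a 2) (a 3) ∣ d 2 → FrobBound a d ∨
      (¬ Nat.gcd (a 0) (a 1) ∣ d 2 ∧ a 0 ∣ d 1 ∧ a 1 ∣ d 1) := fun h =>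
    ((R.reindex ⟨![2, 3, 0, 1], ![2, 3, 0, 1], by decide, by decide⟩ (Equiv.swap 0 1)).split_aux
      h2 h3 h0 h1 (n 0) h).imp_left (FrobBound.reindex _ _)
  by_cases hF : FrobBound a d
  · exact hF
  have n01 : ¬ Nat.gcd (a 0) (a 1) ∣ d 2 := by tauto
  have n23 : ¬ Nat.gcd (a 2) (a 3) ∣ d 2 := by tauto
  obtain ⟨-, h20, h30⟩ := (A n01).resolve_left hF
  obtain ⟨-, h01, h11⟩ := (B n23).resolve_left hF
  refine R.frobBound_of_chain 0 2 1 3 (by decide) (by ring) ?_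
  have H1 := Nat.le_of_dvd (R.dpos 0) (Nat.lcm_dvd h0 h20)
  have := add_le_of_not_dvd (R.dpos 1) (Nat.lcm_dvd (gcd_dvd_of_left (y := a 2) h01) h11)
    (Nat.lcm_dvd (R.tri 0 1 2 _ (k := Nat.gcd (Nat.gcd (a 0) (a 2)) (a 1))) h3)
    (fun h => n01 (dvd_of_dvd_lcm ((gcd_dvd_of_right (Nat.dvd_lcm_right _ _)).trans h)
      (R.tri 0 1 2 _) (R.tri 0 1 3 _)))
    (fun h => n23 (dvd_of_dvd_lcm ((gcd_dvd_of_right (Nat.dvd_lcm_right _ _)).trans h)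
      (R.tri 0 2 3 _) (R.tri 1 2 3 _)))
  omega

/-! ### All weights dividing a single degree -/

/-- A weight is redundant if it divides every common multiple of the other weights. -/
def Redundant (a : Fin 4 → ℕ) (i : Fin 4) : Prop := ∀ m, (∀ j, j ≠ i → a j ∣ m) → a i ∣ m

theorem redundant_reindex (σ : Equiv.Perm (Fin 4)) (i : Fin 4) :
    Redundant (a ∘ σ) i ↔ Redundant a (σ i) := by
  refine forall_congr' fun m => imp_congr ⟨fun h j hj => ?_, fun h j hj => ?_⟩ Iff.rfl
  · have := h (σ.symm j) (fun hh => hj (by rw [← hh]; simp))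
    simpa using this
  · exact h (σ j) (σ.injective.ne hj)

theorem not_dvd_of_not_redundant {i : Fin 4} (h : ¬ Redundant a i) {x : ℕ}
    (hx : ∃ j k l, j ≠ i ∧ k ≠ i ∧ l ≠ i ∧ x ∣ Nat.lcm (Nat.lcm (a j) (a k)) (a l)) :
    ¬ a i ∣ x := by
  obtain ⟨j, k, l, hj, hk, hl, hx⟩ := hx
  exact fun h' => h fun m hm => (h'.trans hx).trans
    (Nat.lcm_dvd (Nat.lcm_dvd (hm j hj) (hm k hk)) (hm l hl))

/-- If two weights are not redundant, the three lcms of the chain are proper divisors of `d 0` whose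
sum is at most `d 0`. -/
theorem Reg.frobBound_of_common_of_not_redundant (R : Reg a d) (h : ∀ i, a i ∣ d 0)
    (n1 : ∀ i, ¬ a i ∣ d 1) (n2 : ∀ i, ¬ a i ∣ d 2)
    (r2 : ¬ Redundant a 2) (r3 : ¬ Redundant a 3) : FrobBound a d := by
  refine R.frobBound_of_chain 0 1 2 3 (by decide) (by ring) ?_
  set e1 := Nat.lcm (a 0) (a 1) with he1
  set e2 := Nat.lcm (Nat.gcd (a 0) (a 1)) (a 2) with he2
  set e3 := Nat.lcm (Nat.gcd (Nat.gcd (a 0) (a 1)) (a 2)) (a 3) with he3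
  have d1 : e1 ∣ d 0 := Nat.lcm_dvd (h _) (h _)
  have d2 : e2 ∣ d 0 := Nat.lcm_dvd (R.pair 0 1 (by decide) 0 1 (by decide) |>.elim id
    (fun _ => gcd_dvd_of_left (h _))) (h _)
  have d3 : e3 ∣ d 0 := Nat.lcm_dvd (R.tri 0 1 2 _) (h _)
  have H13 := add_le_of_not_dvd (Nat.pos_of_dvd_of_pos (Nat.lcm_dvd d1 d3) (R.dpos 0))
    (Nat.dvd_lcm_left e1 e3) (Nat.dvd_lcm_right e1 e3)
    (fun hh => (R.pair 0 3 (by decide) 1 2 (by decide)).elim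
      (fun g => n1 0 (dvd_of_dvd_lcm ((Nat.dvd_lcm_left _ _).trans hh) (R.tri 0 1 2 _) g))
      (fun g => n2 0 (dvd_of_dvd_lcm ((Nat.dvd_lcm_left _ _).trans hh) (R.tri 0 1 2 _) g)))
    (fun hh => not_dvd_of_not_redundant r3 ⟨0, 1, 2, by decide, by decide, by decide,
      Nat.dvd_lcm_left _ _⟩ ((Nat.dvd_lcm_right _ _).trans hh))
  have H := two_mul_le (R.dpos 0) (Nat.lcm_dvd d1 d3) (h 2)
    (not_dvd_of_not_redundant r2 ⟨0, 1, 3, by decide, by decide, by decide,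
      Nat.lcm_dvd (Nat.dvd_lcm_left _ _) (Nat.lcm_dvd
        ((gcd_dvd_of_left (gcd_dvd_of_left (Nat.dvd_lcm_left _ _))).trans (Nat.dvd_lcm_left _ _))
        (Nat.dvd_lcm_right _ _))⟩)
  have H2 := two_mul_le (R.dpos 0) d2 (h 3)
    (not_dvd_of_not_redundant r3 ⟨0, 1, 2, by decide, by decide, by decide,
      Nat.lcm_dvd_lcm_of_dvd_left _ (gcd_dvd_of_left (Nat.dvd_lcm_left _ _))⟩)
  omega

/-- The subcase of `Reg.frobBound_of_common_aux` where the weight `0` is redundant. The lcms of the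
chain `0123` are bounded by fractions of `d 0` summing to `1`: the first two together by `5/6` and
the third by `1/6` if the weight `2` is redundant, and by `1/4`, `1/2`, `1/4` otherwise. -/
theorem Reg.frobBound_of_common_aux₀ (R : Reg a d) (h : ∀ i, a i ∣ d 0)
    (g23 : ¬ Nat.gcd (a 2) (a 3) ∣ d 2) (g03 : ¬ Nat.gcd (a 0) (a 3) ∣ d 1)
    (n1 : ∀ i, ¬ a i ∣ d 1) (n2 : ∀ i, ¬ a i ∣ d 2) (r0 : Redundant a 0) : FrobBound a d := by
  refine R.frobBound_of_chain 0 1 2 3 (by decide) (by ring) ?_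
  set e1 := Nat.lcm (a 0) (a 1) with he1
  set e2 := Nat.lcm (Nat.gcd (a 0) (a 1)) (a 2) with he2
  set e3 := Nat.lcm (Nat.gcd (Nat.gcd (a 0) (a 1)) (a 2)) (a 3) with he3
  have d1 : e1 ∣ d 0 := Nat.lcm_dvd (h _) (h _)
  have d2 : e2 ∣ d 0 := Nat.lcm_dvd (gcd_dvd_of_left (h _)) (h _)
  have d3 : e3 ∣ d 0 := Nat.lcm_dvd (gcd_dvd_of_right (h _)) (h _)
  have s1 : ¬ Nat.gcd (a 2) (a 3) ∣ e1 := fun hh =>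
    g23 (dvd_of_dvd_lcm hh (R.tri 0 2 3 _) (R.tri 1 2 3 _))
  have s2 : ¬ Nat.gcd (a 0) (a 3) ∣ e2 := fun hh =>
    g03 (dvd_of_dvd_lcm hh (R.tri 0 1 3 _) (R.tri 0 2 3 _))
  have p1 := two_mul_le (R.dpos 0) d1 (gcd_dvd_of_left (h 2)) s1
  have p2 := two_mul_le (R.dpos 0) d2 (gcd_dvd_of_left (h 0)) s2
  have g03' := (R.pair 0 3 (by decide) 1 2 (by decide)).resolve_left g03
  have g23' := (R.pair 2 3 (by decide) 1 2 (by decide)).resolve_right g23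
  -- By redundancy of the weight `0`, its gcds with the other weights cannot all divide `d 2`.
  have hy : ¬ Nat.gcd (a 0) (a 1) ∣ d 2 ∨ ¬ Nat.gcd (a 0) (a 2) ∣ d 2 := by
    by_contra! hcon
    have : a 0 ∣ Nat.lcm (Nat.lcm (a 1) (a 2)) (a 3) := r0 _ fun j hj => by
      fin_cases j
      · exact absurd rfl hj
      · exact (Nat.dvd_lcm_left _ _).trans (Nat.dvd_lcm_left _ _)
      · exact (Nat.dvd_lcm_right _ _).trans (Nat.dvd_lcm_left _ _)
      · exact Nat.dvd_lcm_right _ _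
    refine n2 0 (dvd_of_dvd_lcm this ?_ g03')
    exact dvd_of_dvd_lcm (Nat.gcd_dvd_right _ _)
      ((Nat.gcd_dvd_gcd_of_dvd_left _ (Nat.gcd_dvd_left _ _)).trans hcon.1)
      ((Nat.gcd_dvd_gcd_of_dvd_left _ (Nat.gcd_dvd_left _ _)).trans hcon.2)
  by_cases r2 : Redundant a 2
  · have hx : ¬ Nat.gcd (a 0) (a 2) ∣ d 1 ∨ ¬ Nat.gcd (a 1) (a 2) ∣ d 1 := by
      by_contra! hcon
      have : a 2 ∣ Nat.lcm (Nat.lcm (a 0) (a 1)) (a 3) := r2 _ fun j hj => by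
        fin_cases j
        · exact (Nat.dvd_lcm_left _ _).trans (Nat.dvd_lcm_left _ _)
        · exact (Nat.dvd_lcm_right _ _).trans (Nat.dvd_lcm_left _ _)
        · exact absurd rfl hj
        · exact Nat.dvd_lcm_right _ _
      rw [Nat.gcd_comm (a 0), Nat.gcd_comm (a 1)] at hcon
      refine n1 2 (dvd_of_dvd_lcm this ?_ g23')
      exact dvd_of_dvd_lcm (Nat.gcd_dvd_right _ _)
        ((Nat.gcd_dvd_gcd_of_dvd_left _ (Nat.gcd_dvd_left _ _)).trans hcon.1)
        ((Nat.gcd_dvd_gcd_of_dvd_left _ (Nat.gcd_dvd_left _ _)).trans hcon.2)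
    have hne : e1 ≠ e2 := fun hh => s2 (hh ▸ gcd_dvd_of_left (Nat.dvd_lcm_left _ _))
    have p12 := six_mul_add_le (R.dpos 0) d1 d2 p1 p2 hne
    have p3 : 6 * e3 ≤ d 0 := by
      rcases hx with hx | hx <;> rcases hy with hy | hy
      · refine six_mul_le (R.dpos 0) d3 (gcd_dvd_of_left (h 0)) (gcd_dvd_of_left (h 0))
          (fun hh => hx (dvd_of_dvd_lcm hh ?_ (R.tri 0 1 2 _)))
          (fun hh => hy (dvd_of_dvd_lcm hh ?_ (R.tri 0 1 2 _)))
        · exact dvd_of_dvd_lcm (Nat.gcd_dvd_right _ _) (R.tri 0 1 2 _) (R.tri 0 2 3 _)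
        · exact dvd_of_dvd_lcm (Nat.gcd_dvd_right _ _) (R.tri 0 1 2 _) (R.tri 0 1 3 _)
      · exact absurd (R.pair 0 2 (by decide) 1 2 (by decide)) (by tauto)
      · refine six_mul_le (R.dpos 0) d3 (gcd_dvd_of_left (h 1)) (gcd_dvd_of_left (h 0))
          (fun hh => hx (dvd_of_dvd_lcm hh ?_ (R.tri 0 1 2 _)))
          (fun hh => hy (dvd_of_dvd_lcm hh ?_ (R.tri 0 1 2 _)))
        · exact dvd_of_dvd_lcm (Nat.gcd_dvd_right _ _) (R.tri 0 1 2 _) (R.tri 1 2 3 _)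
        · exact dvd_of_dvd_lcm (Nat.gcd_dvd_right _ _) (R.tri 0 1 2 _) (R.tri 0 1 3 _)
      · refine six_mul_le (R.dpos 0) d3 (gcd_dvd_of_left (h 1)) (gcd_dvd_of_left (h 0))
          (fun hh => hx (dvd_of_dvd_lcm hh ?_ (R.tri 0 1 2 _)))
          (fun hh => hy (dvd_of_dvd_lcm hh ?_ (R.tri 0 1 2 _)))
        · exact dvd_of_dvd_lcm (Nat.gcd_dvd_right _ _) (R.tri 0 1 2 _) (R.tri 1 2 3 _)
        · exact dvd_of_dvd_lcm (Nat.gcd_dvd_right _ _) (R.tri 0 1 2 _) (R.tri 0 2 3 _)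
    omega
  · have u : ∀ x, x ∣ a 0 → x ∣ Nat.lcm (Nat.lcm (a 0) (a 1)) (a 3) := fun x hx =>
      hx.trans ((Nat.dvd_lcm_left _ _).trans (Nat.dvd_lcm_left _ _))
    have u3 : e3 ∣ Nat.lcm (Nat.lcm (a 0) (a 1)) (a 3) :=
      Nat.lcm_dvd (u _ (gcd_dvd_of_left (Nat.gcd_dvd_left _ _))) (Nat.dvd_lcm_right _ _)
    have q1 := four_mul_le (R.dpos 0) d1 (gcd_dvd_of_left (h 2)) (h 2) s1
      (not_dvd_of_not_redundant r2 ⟨0, 1, 3, by decide, by decide, by decide,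
        Nat.lcm_dvd_lcm_of_dvd_right _ (Nat.gcd_dvd_right _ _)⟩)
    have q3 : 4 * e3 ≤ d 0 := by
      rcases hy with hy | hy
      · exact four_mul_le (R.dpos 0) d3 (gcd_dvd_of_left (h 0)) (h 2)
          (fun hh => hy (dvd_of_dvd_lcm hh (R.tri 0 1 2 _) (R.tri 0 1 3 _)))
          (not_dvd_of_not_redundant r2 ⟨0, 1, 3, by decide, by decide, by decide,
            Nat.lcm_dvd u3 (u _ (Nat.gcd_dvd_left _ _))⟩)
      · exact four_mul_le (R.dpos 0) d3 (gcd_dvd_of_left (h 0)) (h 2)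
          (fun hh => hy (dvd_of_dvd_lcm hh (R.tri 0 1 2 _) (R.tri 0 2 3 _)))
          (not_dvd_of_not_redundant r2 ⟨0, 1, 3, by decide, by decide, by decide,
            Nat.lcm_dvd u3 (u _ (Nat.gcd_dvd_left _ _))⟩)
    omega

/-- All weights divide `d 0` only, and the gcds of the weight `3` with the weights `2` and `0`
miss `d 2` and `d 1`, respectively. -/
theorem Reg.frobBound_of_common_aux (R : Reg a d) (h : ∀ i, a i ∣ d 0)
    (g23 : ¬ Nat.gcd (a 2) (a 3) ∣ d 2) (g03 : ¬ Nat.gcd (a 0) (a 3) ∣ d 1)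
    (n1 : ∀ i, ¬ a i ∣ d 1) (n2 : ∀ i, ¬ a i ∣ d 2) : FrobBound a d := by
  by_cases r0 : Redundant a 0
  · exact R.frobBound_of_common_aux₀ h g23 g03 n1 n2 r0
  by_cases r2 : Redundant a 2
  · exact FrobBound.reindex (Equiv.swap 0 2) (Equiv.swap 1 2)
      ((R.reindex _ _).frobBound_of_common_aux₀ (fun i => h _) g03 g23 (fun i => n2 _)
        (fun i => n1 _) ((redundant_reindex _ _).2 r2))
  · exact FrobBound.reindex (Equiv.swap 0 3) 1
      ((R.reindex _ _).frobBound_of_common_of_not_redundant (fun i => h _) (fun i => n1 _)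
        (fun i => n2 _) (fun hh => r2 ((redundant_reindex _ _).1 hh))
        (fun hh => r0 ((redundant_reindex _ _).1 hh)))

theorem exists_perm {i j k l : Fin 4} (h : Function.Injective ![i, j, k, l]) :
    ∃ σ : Equiv.Perm (Fin 4), ∀ x, σ x = ![i, j, k, l] x :=
  ⟨Equiv.ofBijective _ (Finite.injective_iff_bijective.1 h), fun _ => rfl⟩

/-- A redundant weight is the lcm of its gcds with the other weights, so one of these gcds does not
divide `d 1` and another one does not divide `d 2`. -/
theorem Reg.frobBound_of_common_of_redundant (R : Reg a d) (h : ∀ i, a i ∣ d 0)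
    (n1 : ∀ i, ¬ a i ∣ d 1) (n2 : ∀ i, ¬ a i ∣ d 2) (r3 : Redundant a 3) : FrobBound a d := by
  have key : ∀ m, ¬ a 3 ∣ m → ∃ i, i ≠ 3 ∧ ¬ Nat.gcd (a i) (a 3) ∣ m := by
    intro m hm
    by_contra! hcon
    have h3 : a 3 ∣ Nat.lcm (Nat.lcm (a 0) (a 1)) (a 2) := r3 _ fun j hj => by
      fin_cases j
      · exact (Nat.dvd_lcm_left _ _).trans (Nat.dvd_lcm_left _ _)
      · exact (Nat.dvd_lcm_right _ _).trans (Nat.dvd_lcm_left _ _)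
      · exact Nat.dvd_lcm_right _ _
      · exact absurd rfl hj
    have q0 := hcon 0 (by decide)
    have q1 := hcon 1 (by decide)
    have q2 := hcon 2 (by decide)
    rw [Nat.gcd_comm] at q0 q1 q2
    refine hm (dvd_of_dvd_lcm h3 ?_ q2)
    exact dvd_of_dvd_lcm (Nat.gcd_dvd_right _ _)
      ((Nat.gcd_dvd_gcd_of_dvd_left _ (Nat.gcd_dvd_left _ _)).trans q0)
      ((Nat.gcd_dvd_gcd_of_dvd_left _ (Nat.gcd_dvd_left _ _)).trans q1)
  obtain ⟨i, hi, hi'⟩ := key _ (n1 3)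
  obtain ⟨j, hj, hj'⟩ := key _ (n2 3)
  have hij : i ≠ j := by
    rintro rfl
    exact (R.pair i 3 hi 1 2 (by decide)).elim hi' hj'
  obtain ⟨l, hl⟩ : ∃ l, Function.Injective ![i, l, j, 3] := by
    clear hi' hj' key
    revert i j
    decide
  obtain ⟨σ, hσ⟩ := exists_perm hl
  refine FrobBound.reindex σ 1 ((R.reindex σ 1).frobBound_of_common_aux (fun i => h _) ?_ ?_
    (fun i => n1 _) (fun i => n2 _))
  · simpa [hσ] using hj'
  · simpa [hσ] using hi'

/-- The case where all weights divide the same degree and none divides another one. -/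
theorem Reg.frobBound_of_common (R : Reg a d) (h : ∀ i, a i ∣ d 0)
    (n1 : ∀ i, ¬ a i ∣ d 1) (n2 : ∀ i, ¬ a i ∣ d 2) : FrobBound a d := by
  by_cases r3 : Redundant a 3
  · exact R.frobBound_of_common_of_redundant h n1 n2 r3
  by_cases r2 : Redundant a 2
  · exact FrobBound.reindex (Equiv.swap 2 3) 1
      ((R.reindex _ _).frobBound_of_common_of_redundant (fun i => h _) (fun i => n1 _)
        (fun i => n2 _) ((redundant_reindex _ _).2 r2))
  exact R.frobBound_of_common_of_not_redundant h n1 n2 r2 r3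

/-! ### All cases of four weights and three degrees -/

/-- A degree divisible by no weight. Each weight divides `d 0`, `d 1` or both, and every such
pattern is one of a `2 + 2` split, three weights on one degree only, or four on one degree only. -/
theorem Reg.frobBound_of_missed (R : Reg a d) (n : ∀ i, ¬ a i ∣ d 2) : FrobBound a d := by
  have home : ∀ i, a i ∣ d 0 ∨ a i ∣ d 1 := by
    intro i
    obtain ⟨j, hj⟩ := R.home i
    fin_cases j
    · exact .inl hj
    · exact .inr hj
    · exact absurd hj (n i)
  have split : ∀ i j k l, Function.Injective ![i, j, k, l] → a i ∣ d 0 → a j ∣ d 0 → a k ∣ d 1 →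
      a l ∣ d 1 → FrobBound a d := by
    intro i j k l h hi hj hk hl
    obtain ⟨σ, hσ⟩ := exists_perm h
    refine FrobBound.reindex σ 1 ((R.reindex σ 1).frobBound_of_split (fun i => n _) ?_ ?_ ?_ ?_) <;>
    simpa [hσ]
  have star : ∀ i j k l, Function.Injective ![i, j, k, l] → a i ∣ d 1 → a j ∣ d 0 → a k ∣ d 0 →
      a l ∣ d 0 → ¬ a j ∣ d 1 → ¬ a k ∣ d 1 → ¬ a l ∣ d 1 → FrobBound a d := by
    intro i j k l h hi hj hk hl hj' hk' hl'
    obtain ⟨σ, hσ⟩ := exists_perm h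
    refine FrobBound.reindex σ 1 ((R.reindex σ 1).frobBound_of_star
      ?_ ?_ ?_ ?_ ?_ (n _) ?_ (n _) ?_ (n _)) <;>
    simpa [hσ]
  have star' : ∀ i j k l, Function.Injective ![i, j, k, l] → a i ∣ d 0 → a j ∣ d 1 → a k ∣ d 1 →
      a l ∣ d 1 → ¬ a j ∣ d 0 → ¬ a k ∣ d 0 → ¬ a l ∣ d 0 → FrobBound a d := by
    intro i j k l h hi hj hk hl hj' hk' hl'
    obtain ⟨σ, hσ⟩ := exists_perm h
    refine FrobBound.reindex σ (Equiv.swap 0 1) ((R.reindex σ (Equiv.swap 0 1)).frobBound_of_star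
      ?_ ?_ ?_ ?_ ?_ (n _) ?_ (n _) ?_ (n _)) <;>
    simpa [hσ]
  have common : (∀ i, a i ∣ d 0) → (∀ i, ¬ a i ∣ d 1) → FrobBound a d := fun h h' =>
    R.frobBound_of_common h h' n
  have common' : (∀ i, a i ∣ d 1) → (∀ i, ¬ a i ∣ d 0) → FrobBound a d := fun h h' =>
    FrobBound.reindex 1 (Equiv.swap 0 1)
      ((R.reindex 1 (Equiv.swap 0 1)).frobBound_of_common (fun i => h _) (fun i => h' _)
        (fun i => n _))
  have s1 := split 0 1 2 3 (by decide)
  have s2 := split 0 2 1 3 (by decide)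
  have s3 := split 0 3 1 2 (by decide)
  have s4 := split 1 2 0 3 (by decide)
  have s5 := split 1 3 0 2 (by decide)
  have s6 := split 2 3 0 1 (by decide)
  have t0 := star 0 1 2 3 (by decide)
  have t1 := star 1 0 2 3 (by decide)
  have t2 := star 2 0 1 3 (by decide)
  have t3 := star 3 0 1 2 (by decide)
  have t0' := star' 0 1 2 3 (by decide)
  have t1' := star' 1 0 2 3 (by decide)
  have t2' := star' 2 0 1 3 (by decide)
  have t3' := star' 3 0 1 2 (by decide)
  simp only [Fin.forall_fin_succ, Fin.forall_fin_zero, and_true, Fin.succ_zero_eq_one,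
    Fin.succ_one_eq_two, Fin.isValue] at common common' home
  clear split star star' n
  by_contra hF
  simp only [hF, imp_false] at s1 s2 s3 s4 s5 s6 t0 t1 t2 t3 t0' t1' t2' t3' common common'
  grind

/-- By Hall's theorem, either three of the weights divide
distinct degrees, or some degree is divisible by no weight, or two of the degrees are divisible
by only one and the same weight. -/
theorem Reg.frobBound (R : Reg a d) : FrobBound a d := by
  have missed : ∀ j, (∀ i, ¬ a i ∣ d j) → FrobBound a d := fun j h =>
    FrobBound.reindex 1 (Equiv.swap j 2)
      ((R.reindex 1 (Equiv.swap j 2)).frobBound_of_missed (fun i => by simpa using h i))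
  by_cases hall : ∃ f : Fin 3 → Fin 4, Function.Injective f ∧ ∀ j, f j ∈ ({i | a i ∣ d j} : Finset (Fin 4))
  · obtain ⟨f, hf, hfd⟩ := hall
    simp only [mem_filter, mem_univ, true_and] at hfd
    obtain ⟨x, hx⟩ : ∃ x, x ∉ Set.range f := by
      by_contra! hcon
      simpa using Fintype.card_le_of_surjective f hcon
    obtain ⟨j, hj⟩ := R.home x
    have hinj : Function.Injective (Fin.cons x (f ∘ Equiv.swap 0 j) : Fin 4 → Fin 4) :=
      Fin.cons_injective_iff.2 ⟨fun h => hx (Set.range_comp_subset_range _ _ h),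
        hf.comp (Equiv.injective _)⟩
    obtain ⟨σ, hσ⟩ : ∃ σ : Equiv.Perm (Fin 4), ∀ y,
        σ y = (Fin.cons x (f ∘ Equiv.swap 0 j) : Fin 4 → Fin 4) y :=
      ⟨Equiv.ofBijective _ (Finite.injective_iff_bijective.1 hinj), fun _ => rfl⟩
    have hs : ∀ y : Fin 3, σ y.succ = f (Equiv.swap 0 j y) := fun y => by rw [hσ]; simp
    refine FrobBound.reindex σ (Equiv.swap 0 j)
      ((R.reindex σ (Equiv.swap 0 j)).frobBound_of_matching ?_ ?_ ?_ ?_)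
    · simpa [hσ] using hj
    · have := hs 0; have h := hfd (Equiv.swap 0 j 0)
      rw [← this] at h; exact h
    · have := hs 1; have h := hfd (Equiv.swap 0 j 1)
      rw [← this] at h; exact h
    · have := hs 2; have h := hfd (Equiv.swap 0 j 2)
      rw [← this] at h; exact h
  rw [← Finset.all_card_le_biUnion_card_iff_exists_injective] at hall
  push Not at hall
  obtain ⟨s, hs⟩ := hall
  by_cases hmiss : ∃ j, ∀ i, ¬ a i ∣ d j
  · exact missed _ hmiss.choose_spec
  push Not at hmiss
  have hU : ∀ i, i ∈ s.biUnion (fun j => ({i | a i ∣ d j} : Finset (Fin 4))) ↔ ∃ j ∈ s, a i ∣ d j := by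
    intro i; simp
  set U := s.biUnion (fun j => ({i | a i ∣ d j} : Finset (Fin 4))) with hUdef
  have s3 : s.card < 3 := by
    by_contra hcon
    have hs' : s = univ := by
      apply Finset.eq_univ_of_card
      have := Finset.card_le_univ s
      simp at this ⊢
      omega
    have : U = univ := by
      ext i
      simpa [hU, hs'] using R.home i
    rw [this, hs'] at hs
    simp at hs
  have sne : s.Nonempty := by
    rw [Finset.nonempty_iff_ne_empty]; rintro rfl; simp at hs
  have U1 : 1 ≤ U.card := by
    obtain ⟨j, hj⟩ := sne
    obtain ⟨i, hi⟩ := hmiss j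
    exact Finset.card_pos.2 ⟨i, (hU i).2 ⟨j, hj, hi⟩⟩
  have s2 : s.card = 2 := by omega
  obtain ⟨j, j', hjj, hsj⟩ := Finset.card_eq_two.1 s2
  obtain ⟨x, hx⟩ := Finset.card_eq_one.1 (show U.card = 1 by omega)
  have hUx : ∀ i, (a i ∣ d j ∨ a i ∣ d j') ↔ i = x := by
    intro i
    have := hU i
    rw [hx, hsj] at this
    simpa using this.symm
  have hxj : a x ∣ d j := by
    obtain ⟨i, hi⟩ := hmiss j
    rwa [(hUx i).1 (.inl hi)] at hi
  obtain ⟨k, hkj, hkj'⟩ : ∃ k, k ≠ j ∧ k ≠ j' := by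
    clear * -
    revert j j'; decide
  have hk : ∀ i, i ≠ x → a i ∣ d k := by
    intro i hi
    obtain ⟨t, ht⟩ := R.home i
    have h1 : t ≠ j := fun h => hi ((hUx i).1 (.inl (h ▸ ht)))
    have h2 : t ≠ j' := fun h => hi ((hUx i).1 (.inr (h ▸ ht)))
    have : t = k := by omega
    rwa [← this]
  have hinj : Function.Injective ![k, j, j'] := by
    clear * - hjj hkj hkj'
    revert k j j'; decide
  obtain ⟨τ, hτ⟩ : ∃ τ : Equiv.Perm (Fin 3), ∀ y, τ y = ![k, j, j'] y :=
    ⟨Equiv.ofBijective _ (Finite.injective_iff_bijective.1 hinj), fun _ => rfl⟩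
  have hne : ∀ y, y ≠ 0 → Equiv.swap 0 x y ≠ x := by
    intro y hy h
    rw [Equiv.swap_apply_eq_iff] at h
    simp at h
    exact hy h
  have hmem : ∀ y, y ≠ 0 → a (Equiv.swap 0 x y) ∣ d k := fun y hy => hk _ (hne y hy)
  have hnm : ∀ y, y ≠ 0 → ¬ a (Equiv.swap 0 x y) ∣ d j := fun y hy h =>
    hne y hy ((hUx _).1 (.inl h))
  have hnm' : ∀ y, y ≠ 0 → ¬ a (Equiv.swap 0 x y) ∣ d j' := fun y hy h =>
    hne y hy ((hUx _).1 (.inr h))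
  refine FrobBound.reindex (Equiv.swap 0 x) τ ((R.reindex (Equiv.swap 0 x) τ).frobBound_of_star
      ?_ ?_ ?_ ?_ ?_ ?_ ?_ ?_ ?_ ?_) <;> simp only [Function.comp_apply, hτ]
  · simpa using hxj
  · exact hmem 1 (by decide)
  · exact hmem 2 (by decide)
  · exact hmem 3 (by decide)
  · exact hnm 1 (by decide)
  · exact hnm' 1 (by decide)
  · exact hnm 2 (by decide)
  · exact hnm' 2 (by decide)
  · exact hnm 3 (by decide)
  · exact hnm' 3 (by decide)

end

/-! ### Regularity by counting -/

/-- Regularity, restated as a count: each `g > 1` divides at most as many weights as degrees. -/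
def CountReg {ι κ : Type*} (D : Finset ι) (d : ι → ℕ) (A : Finset κ) (a : κ → ℕ) : Prop :=
  ∀ g, 1 < g → #{i ∈ A | g ∣ a i} ≤ #{j ∈ D | g ∣ d j}

theorem IsHRegularOn.countReg {ι κ : Type*} {D : Finset ι} {d : ι → ℕ} {A : Finset κ} {a : κ → ℕ}
    (R : IsHRegularOn 1 D d A a) (ha : ∀ i ∈ A, 0 < a i) : CountReg D d A a := by
  intro g hg
  set I := A.filter (fun i => g ∣ a i) with hI
  by_cases hne : I.Nonempty
  swap
  · rw [Finset.not_nonempty_iff_eq_empty] at hne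
    rw [hne]; simp
  have hgI : g ∣ I.gcd a := Finset.dvd_gcd fun i hi => (Finset.mem_filter.1 hi).2
  have hpos : I.gcd a ≠ 0 := by
    obtain ⟨i, hi⟩ := hne
    intro h0
    have := Finset.gcd_eq_zero_iff.1 h0 i hi
    have := ha i (Finset.mem_filter.1 hi).1
    omega
  have h1 : 1 < I.gcd a := hg.trans_le (Nat.le_of_dvd (Nat.pos_of_ne_zero hpos) hgI)
  rcases R I (Finset.filter_subset _ _) hne h1 with ⟨P, hP, hc, hd⟩ | h
  · rw [← hc]
    exact Finset.card_le_card fun j hj => Finset.mem_filter.2 ⟨hP hj, hgI.trans (hd j hj)⟩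
  · have := Nat.dvd_one.1 h
    omega

theorem CountReg.exists_home {ι κ : Type*} {D : Finset ι} {d : ι → ℕ} {A : Finset κ} {a : κ → ℕ}
    (R : CountReg D d A a) {i : κ} (hi : i ∈ A) (h2 : 2 ≤ a i) : ∃ j ∈ D, a i ∣ d j := by
  have h1 := R (a i) h2
  have h3 : 0 < #{k ∈ A | a i ∣ a k} :=
    Finset.card_pos.2 ⟨i, Finset.mem_filter.2 ⟨hi, dvd_rfl⟩⟩
  obtain ⟨j, hj⟩ := Finset.card_pos.1 (h3.trans_le h1)
  exact ⟨j, (Finset.mem_filter.1 hj).1, (Finset.mem_filter.1 hj).2⟩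

/-- Counting recovers all the conditions in `Reg`. The assumption `1 < g` costs nothing, as `1`
divides everything. -/
theorem reg_of_count {a : Fin 4 → ℕ} {d : Fin 3 → ℕ} (ha : ∀ i, 0 < a i) (hd : ∀ j, 0 < d j)
    (C : ∀ g, 1 < g → #{i | g ∣ a i} ≤ #{j | g ∣ d j}) : Reg a d := by
  have C' : ∀ g i, g ∣ a i → g ≠ 1 → ∀ I : Finset (Fin 4), (∀ i ∈ I, g ∣ a i) →
      #I ≤ #{j | g ∣ d j} := by
    intro g i hi hg I hI
    have : g ≠ 0 := fun h => (ha i).ne' (Nat.eq_zero_of_zero_dvd (h ▸ hi))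
    exact (Finset.card_le_card fun i hi => by simpa using hI i hi).trans (C g (by omega))
  refine ⟨ha, hd, fun i => ?_, fun i i' hi j j' hj => ?_, fun i i' i'' h h' h'' k hi hi' hi'' j => ?_,
    fun k hk => ?_⟩
  · by_cases h1 : a i = 1
    · exact ⟨0, by simp [h1]⟩
    have := C' (a i) i dvd_rfl h1 {i} (by simp)
    obtain ⟨j, hj⟩ := Finset.card_pos.1 (this.trans_lt' (by simp))
    exact ⟨j, by simpa using hj⟩
  · by_cases h1 : Nat.gcd (a i) (a i') = 1
    · simp [h1]
    have h2 := C' _ i (Nat.gcd_dvd_left _ _) h1 {i, i'}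
      (by simp [Nat.gcd_dvd_left, Nat.gcd_dvd_right])
    rw [Finset.card_pair hi] at h2
    by_contra! hcon
    have h3 : ({t | Nat.gcd (a i) (a i') ∣ d t} : Finset (Fin 3)) ⊆ univ \ {j, j'} := by
      intro t ht
      simp only [Finset.mem_filter, Finset.mem_univ, true_and] at ht
      simp only [Finset.mem_sdiff, Finset.mem_univ, true_and, Finset.mem_insert,
        Finset.mem_singleton, not_or]
      exact ⟨fun h => hcon.1 (h ▸ ht), fun h => hcon.2 (h ▸ ht)⟩
    have h4 := Finset.card_le_card h3
    rw [Finset.card_sdiff_of_subset (Finset.subset_univ _), Finset.card_pair hj] at h4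
    simp at h4
    omega
  · by_cases h1 : k = 1
    · simp [h1]
    have h2 := C' k i hi h1 {i, i', i''} (by simp [hi, hi', hi''])
    rw [Finset.card_eq_three.2 ⟨_, _, _, h, h', h'', rfl⟩] at h2
    have h3 : ({j | k ∣ d j} : Finset (Fin 3)) = univ := by
      apply Finset.eq_univ_of_card
      have := Finset.card_le_univ ({j | k ∣ d j} : Finset (Fin 3))
      simp only [Fintype.card_fin] at this ⊢
      omega
    have : j ∈ ({j | k ∣ d j} : Finset (Fin 3)) := by rw [h3]; simp
    simpa using this
  · by_contra h1
    have h2 := C' k 0 (hk 0) h1 univ (fun i _ => hk i)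
    have h3 := Finset.card_le_univ ({j | k ∣ d j} : Finset (Fin 3))
    simp only [Finset.card_univ, Fintype.card_fin] at h2 h3
    omega

theorem exists_map_univ {κ : Type*} (A : Finset κ) {n : ℕ} (h : #A = n) :
    ∃ f : Fin n ↪ κ, univ.map f = A := by
  refine ⟨(A.equivFinOfCardEq h).symm.toEmbedding.trans (Function.Embedding.subtype _), ?_⟩
  ext x
  simp only [Finset.mem_map, Finset.mem_univ, true_and, Function.Embedding.trans_apply,
    Equiv.coe_toEmbedding, Function.Embedding.subtype_apply]
  constructor
  · rintro ⟨y, rfl⟩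
    exact Subtype.property _
  · exact fun hx => ⟨A.equivFinOfCardEq h ⟨x, hx⟩, by simp⟩

theorem mem_of_card_eq_three {ι κ : Type*} {D : Finset ι} {d : ι → ℕ} {A : Finset κ} {a : κ → ℕ}
    (R : CountReg D d A a) (hD : #D = 3) (hA : #A = 4) (ha : ∀ i ∈ A, 0 < a i)
    (hd : ∀ j ∈ D, 0 < d j) (S : AddSubmonoid ℤ) (hS : ∀ i ∈ A, (a i : ℤ) ∈ S) (z : ℤ)
    (hz : deltaOn D d A a < z) : z ∈ S := by
  obtain ⟨f, rfl⟩ := exists_map_univ A hA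
  obtain ⟨e, rfl⟩ := exists_map_univ D hD
  have hR : Reg (a ∘ f) (d ∘ e) := by
    refine reg_of_count (fun i => ha _ (by simp)) (fun j => hd _ (by simp)) fun g hg => ?_
    have := R g hg
    rw [Finset.filter_map, Finset.filter_map, Finset.card_map, Finset.card_map] at this
    exact this
  refine hR.frobBound S (fun i => hS _ (by simp)) z ?_
  simpa [deltaOn, Fin.sum_univ_four, Fin.sum_univ_three] using hz

theorem card_filter_insertNone {τ : Type*} (T : Finset τ) (t : τ → ℕ) (K g : ℕ) :
    #{i ∈ T.insertNone | g ∣ i.elim K t} = (if g ∣ K then 1 else 0) + #{i ∈ T | g ∣ t i} := by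
  rw [Finset.card_filter, Finset.card_filter, Finset.sum_insertNone]
  rfl

/-- The bound when the weights exceed the degrees by one in number. Adjoining the same number `K` to
the weights and to the degrees preserves regularity and the amplitude, and for `K` one of the
weights the semigroup is the same as well; this reduces to four weights and three degrees. -/
theorem mem_of_card_eq {ι κ : Type*} {D : Finset ι} {d : ι → ℕ} {A : Finset κ} {a : κ → ℕ}
    (R : CountReg D d A a) (hD : #D ≤ 3) (hA : #A = #D + 1) (ha : ∀ i ∈ A, 0 < a i)
    (hd : ∀ j ∈ D, 0 < d j) (S : AddSubmonoid ℤ) (hS : ∀ i ∈ A, (a i : ℤ) ∈ S) (z : ℤ)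
    (hz : deltaOn D d A a < z) : z ∈ S := by
  obtain ⟨m, hm⟩ := Nat.exists_eq_add_of_le hD
  induction m generalizing ι κ with
  | zero => exact mem_of_card_eq_three R (by omega) (by omega) ha hd S hS z hz
  | succ m ih =>
    obtain ⟨k, hk⟩ : A.Nonempty := Finset.card_pos.1 (by omega)
    refine ih (D := D.insertNone) (d := fun j => j.elim (a k) d) (A := A.insertNone)
      (a := fun i => i.elim (a k) a) ?_ ?_ ?_ ?_ ?_ ?_ ?_ ?_
    · intro g hg
      have := R g hg
      rw [card_filter_insertNone, card_filter_insertNone]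
      omega
    · simp; omega
    · simp; omega
    · simp [Option.forall]
      exact ⟨ha _ hk, ha⟩
    · simp [Option.forall]
      exact ⟨ha _ hk, hd⟩
    · simp [Option.forall]
      exact ⟨hS _ hk, hS⟩
    · simpa [deltaOn, Finset.sum_insertNone] using hz
    · simp; omega

/-! ### Removing a weight -/

section
variable {ι κ : Type*} {D : Finset ι} {d : ι → ℕ} {A : Finset κ}
  {a : κ → ℕ}

theorem CountReg.erase [DecidableEq κ] (R : CountReg D d A a) (i : κ) : CountReg D d (A.erase i) a := fun g hg =>
  (Finset.card_le_card (Finset.filter_subset_filter _ (Finset.erase_subset _ _))).trans (R g hg)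

/-- Dividing the degree `d j₀`, a multiple of the prime power `p ^ v`, by `p` affects its
divisibility only by multiples of `p ^ v`. -/
theorem CountReg.drop [DecidableEq ι] (R : CountReg D d A a) {p v : ℕ} (hp : p.Prime) {j₀ : ι}
    (hq : p ^ v ∣ d j₀)
    (h : ∀ g, p ^ v ∣ g → #{i ∈ A | g ∣ a i} ≤ #{j ∈ D.erase j₀ | g ∣ d j}) :
    CountReg D (Function.update d j₀ (d j₀ / p)) A a := by
  intro g hg
  by_cases hqg : p ^ v ∣ g
  · refine (h g hqg).trans (Finset.card_le_card fun j hj => ?_)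
    simp only [Finset.mem_filter, Finset.mem_erase] at hj ⊢
    rw [Function.update_of_ne hj.1.1]
    exact ⟨hj.1.2, hj.2⟩
  · refine (R g hg).trans (Finset.card_le_card fun j hj => ?_)
    simp only [Finset.mem_filter] at hj ⊢
    refine ⟨hj.1, ?_⟩
    by_cases hj0 : j = j₀
    swap
    · rw [Function.update_of_ne hj0]; exact hj.2
    subst hj0
    rw [Function.update_self]
    obtain ⟨t, ht⟩ := hj.2
    have hpt : p ∣ t := by
      by_contra hpt
      rw [ht] at hq
      exact hqg (((Nat.Coprime.pow_left v ((Nat.Prime.coprime_iff_not_dvd hp).2 hpt))).dvd_of_dvd_mul_right hq)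
    obtain ⟨u, rfl⟩ := hpt
    rw [ht]
    refine ⟨u, ?_⟩
    rw [show g * (p * u) = p * (g * u) by ring, Nat.mul_div_cancel_left _ hp.pos]

theorem half_le_sub_div {n p : ℕ} (hp : p.Prime) : 2 * (n / p) ≤ n := by
  have := Nat.div_le_div_left (a := n) hp.two_le two_pos
  omega

/-- If only one remaining weight is a multiple of `q`, any degree except a chosen home of that
weight may be dropped. -/
theorem count_le_of_single [DecidableEq ι] {B : Finset κ} {q : ℕ} {k : κ} {h j₀ : ι}
    (hK : {i ∈ B | q ∣ a i} = {k}) (hh : h ∈ D) (hk : a k ∣ d h) (hne : h ≠ j₀) :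
    ∀ g, q ∣ g → #{i ∈ B | g ∣ a i} ≤ #{j ∈ D.erase j₀ | g ∣ d j} := by
  intro g hg
  have hsub : {i ∈ B | g ∣ a i} ⊆ {k} := by
    rw [← hK]
    exact fun i hi => by
      simp only [Finset.mem_filter] at hi ⊢
      exact ⟨hi.1, hg.trans hi.2⟩
  rcases Finset.subset_singleton_iff.1 hsub with h0 | h0
  · rw [h0]; simp
  · rw [h0, Finset.card_singleton]
    have hgk : g ∣ a k := by
      have : k ∈ ({i ∈ B | g ∣ a i} : Finset κ) := by rw [h0]; simp
      exact (Finset.mem_filter.1 this).2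
    exact Finset.card_pos.2 ⟨h, Finset.mem_filter.2
      ⟨Finset.mem_erase.2 ⟨hne, hh⟩, hgk.trans hk⟩⟩

/-- The count at `q` for the weights left after removing a multiple of `q` drops by one. -/
theorem CountReg.card_le [DecidableEq κ] (R : CountReg D d A a) {i : κ} (hi : i ∈ A) {q : ℕ} (hq : 1 < q)
    (hqi : q ∣ a i) : #{k ∈ A.erase i | q ∣ a k} + 1 ≤ #{j ∈ D | q ∣ d j} := by
  refine le_trans (le_of_eq ?_) (R q hq)
  rw [Finset.filter_erase, Finset.card_erase_add_one]
  exact Finset.mem_filter.2 ⟨hi, hqi⟩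

/-- Let `q` divide a removed weight and at least one other weight. Then among the at most three
degrees, one multiple of `q` is not needed to dominate the counts of multiples of `q`. -/
theorem CountReg.exists_drop [DecidableEq ι] [DecidableEq κ] (R : CountReg D d A a) (hD : #D ≤ 3) (ha : ∀ i ∈ A, 2 ≤ a i) {i : κ}
    (hi : i ∈ A) {q : ℕ} (hq : 1 < q) (hqi : q ∣ a i) (hK : {k ∈ A.erase i | q ∣ a k}.Nonempty) :
    ∃ j₀ ∈ D, q ∣ d j₀ ∧
      ∀ g, q ∣ g → #{k ∈ A.erase i | g ∣ a k} ≤ #{j ∈ D.erase j₀ | g ∣ d j} := by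
  have hc := R.card_le hi hq hqi
  have hDq : #{j ∈ D | q ∣ d j} ≤ #D := Finset.card_le_card (Finset.filter_subset _ _)
  have hK1 := Finset.card_pos.2 hK
  have hcase : #{k ∈ A.erase i | q ∣ a k} = 1 ∨ #{k ∈ A.erase i | q ∣ a k} = 2 := by omega
  rcases hcase with h1 | h2
  · obtain ⟨k, hk⟩ := Finset.card_eq_one.1 h1
    have hkm : k ∈ ({k ∈ A.erase i | q ∣ a k} : Finset κ) := by rw [hk]; simp
    have hkA := Finset.mem_of_mem_erase (Finset.mem_filter.1 hkm).1
    obtain ⟨h, hh, hkh⟩ := R.exists_home hkA (ha k hkA)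
    obtain ⟨j₀, hj₀, hne⟩ := Finset.exists_mem_ne (s := {j ∈ D | q ∣ d j}) (by omega) h
    rw [Finset.mem_filter] at hj₀
    exact ⟨j₀, hj₀.1, hj₀.2, count_le_of_single hk hh hkh hne.symm⟩
  · obtain ⟨k, l, hkl, hK'⟩ := Finset.card_eq_two.1 h2
    have hkm : k ∈ ({k ∈ A.erase i | q ∣ a k} : Finset κ) := by rw [hK']; simp
    have hlm : l ∈ ({k ∈ A.erase i | q ∣ a k} : Finset κ) := by rw [hK']; simp
    rw [Finset.mem_filter] at hkm hlm
    have hkA := Finset.mem_of_mem_erase hkm.1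
    have hlA := Finset.mem_of_mem_erase hlm.1
    obtain ⟨h, hh, hkh⟩ := R.exists_home hkA (ha k hkA)
    obtain ⟨h', hh', hlh'⟩ := R.exists_home hlA (ha l hlA)
    have hDall : {j ∈ D | q ∣ d j} = D :=
      Finset.eq_of_subset_of_card_le (Finset.filter_subset _ _) (by omega)
    have hD3 : #D = 3 := by omega
    -- `d x` and `d y` suffice for both weights: each weight divides one of them, and their gcd both
    obtain ⟨x, hx, y, hy, hxy, hkx, hly, hgx, hgy⟩ : ∃ x ∈ D, ∃ y ∈ D, x ≠ y ∧
        a k ∣ d x ∧ (a l ∣ d x ∨ a l ∣ d y) ∧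
        Nat.gcd (a k) (a l) ∣ d x ∧ Nat.gcd (a k) (a l) ∣ d y := by
      by_cases hhh : h = h'
      · subst hhh
        have hq0 : 1 < Nat.gcd (a k) (a l) :=
          hq.trans_le (Nat.le_of_dvd (Nat.gcd_pos_of_pos_left _ (by linarith [ha k hkA]))
            (Nat.dvd_gcd hkm.2 hlm.2))
        have h2 : 2 ≤ #{j ∈ D | Nat.gcd (a k) (a l) ∣ d j} := by
          rw [← Finset.card_pair hkl]
          refine (Finset.card_le_card fun t ht => ?_).trans (R _ hq0)
          simp only [Finset.mem_insert, Finset.mem_singleton] at ht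
          rw [Finset.mem_filter]
          rcases ht with rfl | rfl
          · exact ⟨hkA, Nat.gcd_dvd_left _ _⟩
          · exact ⟨hlA, Nat.gcd_dvd_right _ _⟩
        obtain ⟨y, hy, hne⟩ := Finset.exists_mem_ne (s := {j ∈ D | Nat.gcd (a k) (a l) ∣ d j})
          (by omega) h
        rw [Finset.mem_filter] at hy
        exact ⟨h, hh, y, hy.1, hne.symm, hkh, .inl hlh', gcd_dvd_of_left hkh, hy.2⟩
      · exact ⟨h, hh, h', hh', hhh, hkh, .inr hlh', gcd_dvd_of_left hkh, gcd_dvd_of_right hlh'⟩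
    obtain ⟨j₀, hj₀⟩ : (D \ {x, y}).Nonempty := by
      rw [← Finset.card_pos, Finset.card_sdiff_of_subset, Finset.card_pair hxy]
      · omega
      · intro t ht
        simp only [Finset.mem_insert, Finset.mem_singleton] at ht
        rcases ht with rfl | rfl <;> assumption
    simp only [Finset.mem_sdiff, Finset.mem_insert, Finset.mem_singleton, not_or] at hj₀
    obtain ⟨hj₀, hjx, hjy⟩ := hj₀
    have hqj : q ∣ d j₀ := by
      have : j₀ ∈ ({j ∈ D | q ∣ d j} : Finset ι) := by rw [hDall]; exact hj₀
      exact (Finset.mem_filter.1 this).2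
    refine ⟨j₀, hj₀, hqj, fun g hg => ?_⟩
    have hx' : x ∈ D.erase j₀ := Finset.mem_erase.2 ⟨Ne.symm hjx, hx⟩
    have hy' : y ∈ D.erase j₀ := Finset.mem_erase.2 ⟨Ne.symm hjy, hy⟩
    have hsub : {i' ∈ A.erase i | g ∣ a i'} ⊆ {k, l} := by
      rw [← hK']
      exact fun i hi => by
        simp only [Finset.mem_filter] at hi ⊢
        exact ⟨hi.1, hg.trans hi.2⟩
    by_cases gk : g ∣ a k <;> by_cases gl : g ∣ a l
    · refine (Finset.card_le_card hsub).trans ?_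
      rw [Finset.card_pair hkl, ← Finset.card_pair hxy]
      refine Finset.card_le_card fun t ht => ?_
      simp only [Finset.mem_insert, Finset.mem_singleton] at ht
      rw [Finset.mem_filter]
      rcases ht with rfl | rfl
      · exact ⟨hx', (Nat.dvd_gcd gk gl).trans hgx⟩
      · exact ⟨hy', (Nat.dvd_gcd gk gl).trans hgy⟩
    · have : {i' ∈ A.erase i | g ∣ a i'} ⊆ {k} := fun t ht => by
        have := hsub ht
        simp only [Finset.mem_insert, Finset.mem_singleton] at this ⊢
        refine this.resolve_right ?_
        rintro rfl
        exact gl (Finset.mem_filter.1 ht).2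
      refine (Finset.card_le_card this).trans ?_
      exact Finset.card_pos.2 ⟨x, Finset.mem_filter.2 ⟨hx', gk.trans hkx⟩⟩
    · have : {i' ∈ A.erase i | g ∣ a i'} ⊆ {l} := fun t ht => by
        have := hsub ht
        simp only [Finset.mem_insert, Finset.mem_singleton] at this ⊢
        refine this.resolve_left ?_
        rintro rfl
        exact gk (Finset.mem_filter.1 ht).2
      refine (Finset.card_le_card this).trans (Finset.card_pos.2 ?_)
      rcases hly with hly | hly
      · exact ⟨x, Finset.mem_filter.2 ⟨hx', gl.trans hly⟩⟩
      · exact ⟨y, Finset.mem_filter.2 ⟨hy', gl.trans hly⟩⟩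
    · have : {i' ∈ A.erase i | g ∣ a i'} = ∅ := by
        rw [Finset.eq_empty_iff_forall_notMem]
        intro t ht
        have h' := hsub ht
        have h'' := (Finset.mem_filter.1 ht).2
        simp only [Finset.mem_insert, Finset.mem_singleton] at h'
        rcases h' with rfl | rfl
        · exact gk h''
        · exact gl h''
      rw [this]; simp

theorem sum_update_add [DecidableEq ι] (j₀ : ι) (hj : j₀ ∈ D) (x : ℕ) :
    ∑ j ∈ D, Function.update d j₀ x j + d j₀ = ∑ j ∈ D, d j + x := by
  rw [Finset.sum_update_of_mem hj, ← Finset.add_sum_erase D d hj, Finset.sdiff_singleton_eq_erase]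
  ring

theorem CountReg.card_le_of_dvd (R : CountReg D d A a) {g : ℕ} (hg : 1 < g) {I : Finset κ}
    (hI : ∀ i ∈ I, i ∈ A ∧ g ∣ a i) : #I ≤ #{j ∈ D | g ∣ d j} :=
  (Finset.card_le_card fun i hi => Finset.mem_filter.2 (hI i hi)).trans (R g hg)

/-- The valuation count for `CountReg.mul_self_le`: all four numbers are at most the larger of `e j₀`
and `e j₂`, and at least two of them are at most the smaller. -/
theorem add_le_two_mul {w x y z : ℕ} {e : ι → ℕ} {j₀ j₂ : ι} (hw : w ≤ e j₀ ∨ w ≤ e j₂)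
    (hx : x ≤ e j₀ ∨ x ≤ e j₂) (hy : y ≤ e j₀ ∨ y ≤ e j₂) (hz : z ≤ e j₀ ∨ z ≤ e j₂)
    (h₁ : ∀ j ∈ D, w ≤ e j ∨ x ≤ e j ∨ y ≤ e j) (h₂ : ∀ j ∈ D, w ≤ e j ∨ x ≤ e j ∨ z ≤ e j)
    (h₃ : ∀ j ∈ D, w ≤ e j ∨ y ≤ e j ∨ z ≤ e j) (h₄ : ∀ j ∈ D, x ≤ e j ∨ y ≤ e j ∨ z ≤ e j)
    (hj₀ : j₀ ∈ D) (hj₂ : j₂ ∈ D) : w + x + y + z ≤ 2 * (e j₀ + e j₂) := by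
  have key : ∀ m M : ℕ, w ≤ M → x ≤ M → y ≤ M → z ≤ M → (w ≤ m ∨ x ≤ m ∨ y ≤ m) →
      (w ≤ m ∨ x ≤ m ∨ z ≤ m) → (w ≤ m ∨ y ≤ m ∨ z ≤ m) → (x ≤ m ∨ y ≤ m ∨ z ≤ m) →
      w + x + y + z ≤ 2 * (m + M) := by
    intro m M _ _ _ _ a b c d
    rcases a with a | a | a <;> omega
  rcases le_total (e j₀) (e j₂) with h | h
  · exact key _ _ (by omega) (by omega) (by omega) (by omega) (h₁ _ hj₀) (h₂ _ hj₀) (h₃ _ hj₀)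
      (h₄ _ hj₀)
  · rw [add_comm (e j₀)]
    exact key _ _ (by omega) (by omega) (by omega) (by omega) (h₁ _ hj₂) (h₂ _ hj₂) (h₃ _ hj₂)
      (h₄ _ hj₂)

/-- Let every prime power dividing a weight divide a second one, and take two of the three degrees.
For each prime `p`, every weight has `p`-adic valuation at most the larger of those of the two
degrees (a higher power of `p` would divide two weights but only one degree), and among any three
weights one has valuation at most the smaller (a higher power dividing all three would divide every
degree). So the product of four weights divides the square of the product of the two degrees. -/
theorem CountReg.mul_self_le [DecidableEq ι] [DecidableEq κ] (R : CountReg D d A a) (hd : ∀ j ∈ D, 0 < d j)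
    (ha : ∀ i ∈ A, 2 ≤ a i)
    (hK : ∀ i ∈ A, ∀ p v : ℕ, p.Prime → v ≠ 0 → p ^ v ∣ a i →
      {k ∈ A.erase i | p ^ v ∣ a k}.Nonempty)
    (hA : 4 ≤ #A) {j₀ j₂ : ι} (hj₀ : j₀ ∈ D) (hj₂ : j₂ ∈ D) (hne : j₀ ≠ j₂) (hD : #D = 3)
    {s : ℕ} (hs : ∀ i ∈ A, s ≤ a i) : s * s ≤ d j₀ * d j₂ := by
  obtain ⟨B, hBA, hB⟩ := Finset.exists_subset_card_eq hA
  obtain ⟨f, rfl⟩ := exists_map_univ B hB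
  have hf : ∀ x, f x ∈ A := fun x => hBA (by simp)
  have hfa : ∀ x, a (f x) ≠ 0 := fun x => by have := ha _ (hf x); omega
  have h0 : d j₀ ≠ 0 := (hd _ hj₀).ne'
  have h2 : d j₂ ≠ 0 := (hd _ hj₂).ne'
  have hdvd : a (f 0) * a (f 1) * a (f 2) * a (f 3) ∣ (d j₀ * d j₂) ^ 2 := by
    rw [← Nat.factorization_prime_le_iff_dvd
      (mul_ne_zero (mul_ne_zero (mul_ne_zero (hfa 0) (hfa 1)) (hfa 2)) (hfa 3))
      (pow_ne_zero _ (mul_ne_zero h0 h2))]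
    intro p hp
    have hmax : ∀ x, (a (f x)).factorization p ≤ (d j₀).factorization p ∨
        (a (f x)).factorization p ≤ (d j₂).factorization p := by
      intro x
      by_contra! hcon
      set v := (a (f x)).factorization p with hv
      have hv0 : v ≠ 0 := by omega
      have hvx : p ^ v ∣ a (f x) := Nat.ordProj_dvd _ _
      have hc := R.card_le (hf x) (Nat.one_lt_pow hv0 hp.one_lt) hvx
      have hk := Finset.card_pos.2 (hK _ (hf x) p v hp hv0 hvx)
      have hsub : {j ∈ D | p ^ v ∣ d j} ⊆ D \ {j₀, j₂} := by
        intro j hj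
        rw [Finset.mem_filter] at hj
        simp only [Finset.mem_sdiff, Finset.mem_insert, Finset.mem_singleton, not_or]
        refine ⟨hj.1, ?_, ?_⟩
        · rintro rfl
          have := (hp.pow_dvd_iff_le_factorization h0).1 hj.2
          omega
        · rintro rfl
          have := (hp.pow_dvd_iff_le_factorization h2).1 hj.2
          omega
      have hcs := Finset.card_le_card hsub
      rw [Finset.card_sdiff_of_subset, Finset.card_pair hne] at hcs
      · omega
      · intro t ht
        simp only [Finset.mem_insert, Finset.mem_singleton] at ht
        rcases ht with rfl | rfl <;> assumption
    have hmin : ∀ x y z, x ≠ y → x ≠ z → y ≠ z → ∀ j ∈ D,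
        (a (f x)).factorization p ≤ (d j).factorization p ∨
        (a (f y)).factorization p ≤ (d j).factorization p ∨
        (a (f z)).factorization p ≤ (d j).factorization p := by
      intro x y z hxy hxz hyz j hj
      by_contra! hcon
      set w := (d j).factorization p + 1 with hw
      have hc := R.card_le_of_dvd (g := p ^ w) (I := {f x, f y, f z})
        (Nat.one_lt_pow (by omega) hp.one_lt) (by
          intro i hi
          simp only [Finset.mem_insert, Finset.mem_singleton] at hi
          rcases hi with rfl | rfl | rfl
          · exact ⟨hf _, (hp.pow_dvd_iff_le_factorization (hfa _)).2 (by omega)⟩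
          · exact ⟨hf _, (hp.pow_dvd_iff_le_factorization (hfa _)).2 (by omega)⟩
          · exact ⟨hf _, (hp.pow_dvd_iff_le_factorization (hfa _)).2 (by omega)⟩)
      rw [Finset.card_eq_three.2 ⟨f x, f y, f z, by simpa, by simpa, by simpa, rfl⟩] at hc
      have hall : {j ∈ D | p ^ w ∣ d j} = D :=
        Finset.eq_of_subset_of_card_le (Finset.filter_subset _ _) (by omega)
      rw [← hall, Finset.mem_filter] at hj
      have := (hp.pow_dvd_iff_le_factorization (hd _ hj.1).ne').1 hj.2
      omega
    rw [Nat.factorization_mul (mul_ne_zero (mul_ne_zero (hfa 0) (hfa 1)) (hfa 2)) (hfa 3),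
      Nat.factorization_mul (mul_ne_zero (hfa 0) (hfa 1)) (hfa 2),
      Nat.factorization_mul (hfa 0) (hfa 1), Nat.factorization_pow, Nat.factorization_mul h0 h2]
    simp only [Finsupp.coe_add, Finsupp.coe_smul, Pi.add_apply, Pi.smul_apply, smul_eq_mul]
    have m0 := hmax 0
    have m1 := hmax 1
    have m2 := hmax 2
    have m3 := hmax 3
    exact add_le_two_mul (e := fun j => (d j).factorization p) m0 m1 m2 m3 (hmin 0 1 2 (by decide) (by decide) (by decide))
      (hmin 0 1 3 (by decide) (by decide) (by decide))
      (hmin 0 2 3 (by decide) (by decide) (by decide))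
      (hmin 1 2 3 (by decide) (by decide) (by decide)) hj₀ hj₂
  have hle := Nat.le_of_dvd (by positivity) hdvd
  have h4 : s * s * (s * s) ≤ a (f 0) * a (f 1) * a (f 2) * a (f 3) := by
    calc s * s * (s * s) = s * s * s * s := by ring
      _ ≤ _ := Nat.mul_le_mul (Nat.mul_le_mul (Nat.mul_le_mul (hs _ (hf 0)) (hs _ (hf 1)))
        (hs _ (hf 2))) (hs _ (hf 3))
  by_contra! hcon
  have := Nat.mul_lt_mul_of_lt_of_le hcon hcon.le (by omega)
  nlinarith

/-- One weight can be removed while the degrees are lowered by at least as much in total. If some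
prime power divides a single weight, that weight is removed and its degree lowered. Otherwise the
smallest weight is removed: a degree of at least twice that weight is divided by a prime, or, if
two degrees are divisible by no weight, both of them are. -/
theorem CountReg.exists_removal [DecidableEq ι] [DecidableEq κ] (R : CountReg D d A a) (hD : #D ≤ 3) (hA : #D + 2 ≤ #A)
    (ha : ∀ i ∈ A, 2 ≤ a i) (hd : ∀ j ∈ D, 0 < d j) (ht : ∀ j ∈ D, ∀ k ∈ A, d j ≠ a k) :
    ∃ i ∈ A, ∃ d' : ι → ℕ, CountReg D d' (A.erase i) a ∧ (∀ j ∈ D, 0 < d' j) ∧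
      ∑ j ∈ D, d' j + a i ≤ ∑ j ∈ D, d j := by
  -- as no degree equals a weight, a degree divisible by a weight is at least twice that weight
  have home : ∀ j ∈ D, ∀ k ∈ A, a k ∣ d j → 2 * a k ≤ d j := by
    rintro j hj k hk ⟨t, h⟩
    have hpos := hd j hj
    have hne := ht j hj k hk
    have : 2 ≤ t := by
      by_contra! hcon
      interval_cases t <;> omega
    rw [h]
    nlinarith
  have pos : ∀ (e : ι → ℕ) (j₀ : ι) (p v : ℕ), (∀ j ∈ D, 0 < e j) → p.Prime → v ≠ 0 → j₀ ∈ D →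
      p ^ v ∣ e j₀ → ∀ j ∈ D, 0 < Function.update e j₀ (e j₀ / p) j := by
    intro e j₀ p v he hp hv hj₀ hpe j hj
    by_cases h : j = j₀
    · subst h
      rw [Function.update_self]
      exact Nat.div_pos (Nat.le_of_dvd (he j hj) ((dvd_pow_self p hv).trans hpe)) hp.pos
    · rw [Function.update_of_ne h]
      exact he j hj
  have one : ∀ i ∈ A, ∀ p v : ℕ, p.Prime → v ≠ 0 → ∀ j₀ ∈ D, p ^ v ∣ d j₀ → 2 * a i ≤ d j₀ →
      (∀ g, p ^ v ∣ g → #{k ∈ A.erase i | g ∣ a k} ≤ #{j ∈ D.erase j₀ | g ∣ d j}) →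
      ∃ i ∈ A, ∃ d' : ι → ℕ, CountReg D d' (A.erase i) a ∧ (∀ j ∈ D, 0 < d' j) ∧
        ∑ j ∈ D, d' j + a i ≤ ∑ j ∈ D, d j := by
    intro i hi p v hp hv j₀ hj₀ hpd h2 h
    refine ⟨i, hi, _, (R.erase i).drop hp hpd h, pos d j₀ p v hd hp hv hj₀ hpd, ?_⟩
    have := sum_update_add (d := d) j₀ hj₀ (d j₀ / p)
    have := half_le_sub_div (n := d j₀) hp
    omega
  by_cases hK : ∀ i ∈ A, ∀ p v : ℕ, p.Prime → v ≠ 0 → p ^ v ∣ a i →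
      {k ∈ A.erase i | p ^ v ∣ a k}.Nonempty
  swap
  · push Not at hK
    obtain ⟨i, hi, p, v, hp, hv, hpa, hE⟩ := hK
    obtain ⟨h, hh, hih⟩ := R.exists_home hi (ha i hi)
    refine one i hi p v hp hv h hh (hpa.trans hih) (home h hh i hi hih) fun g hg => ?_
    have : {k ∈ A.erase i | g ∣ a k} ⊆ {k ∈ A.erase i | p ^ v ∣ a k} := fun k hk => by
      rw [Finset.mem_filter] at hk ⊢
      exact ⟨hk.1, hg.trans hk.2⟩
    rw [hE, Finset.subset_empty] at this
    rw [this]; simp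
  obtain ⟨i, hi, hmin⟩ := Finset.exists_min_image A a (Finset.card_pos.1 (by omega))
  by_cases hall : ∀ j ∈ D, ∃ k ∈ A, a k ∣ d j
  · obtain ⟨p, hp, hpa⟩ := Nat.exists_prime_and_dvd (n := a i) (by have := ha i hi; omega)
    have hpa' : p ^ 1 ∣ a i := by simpa using hpa
    obtain ⟨j₀, hj₀, hpj, h⟩ := R.exists_drop hD ha hi (by simpa using hp.one_lt) hpa'
      (hK i hi p 1 hp one_ne_zero hpa')
    obtain ⟨k, hk, hkj⟩ := hall j₀ hj₀
    have := home j₀ hj₀ k hk hkj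
    have := hmin k hk
    exact one i hi p 1 hp one_ne_zero j₀ hj₀ hpj (by omega) h
  -- a degree divisible by no weight misses a prime power of `a i`, which the other two contain
  have miss : ∀ j₀ ∈ D, (∀ k ∈ A, ¬ a k ∣ d j₀) → ∃ p v : ℕ, p.Prime ∧ v ≠ 0 ∧ p ^ v ∣ a i ∧
      #D = 3 ∧ (∀ j ∈ D, j ≠ j₀ → p ^ v ∣ d j) ∧ ∃ k ∈ A, {l ∈ A.erase i | p ^ v ∣ a l} = {k} := by
    intro j₀ hj₀ hno
    have hnd := hno i hi
    rw [Nat.dvd_iff_prime_pow_dvd_dvd] at hnd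
    push Not at hnd
    obtain ⟨p, v, hp, hpa, hpd⟩ := hnd
    have hv : v ≠ 0 := by
      rintro rfl
      simp at hpd
    have hc := R.card_le hi (Nat.one_lt_pow hv hp.one_lt) hpa
    have hk := Finset.card_pos.2 (hK i hi p v hp hv hpa)
    have hsub : {j ∈ D | p ^ v ∣ d j} ⊆ D.erase j₀ := by
      intro j hj
      rw [Finset.mem_filter] at hj
      refine Finset.mem_erase.2 ⟨?_, hj.1⟩
      rintro rfl
      exact hpd hj.2
    have hcs := Finset.card_le_card hsub
    have hce := Finset.card_erase_of_mem hj₀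
    have heq := Finset.eq_of_subset_of_card_le hsub (by omega)
    obtain ⟨k, hk⟩ := Finset.card_eq_one.1
      (show #{l ∈ A.erase i | p ^ v ∣ a l} = 1 by omega)
    refine ⟨p, v, hp, hv, hpa, by omega, fun j hj hne => ?_, k, ?_, hk⟩
    · have : j ∈ ({j ∈ D | p ^ v ∣ d j} : Finset ι) := by
        rw [heq]; exact Finset.mem_erase.2 ⟨hne, hj⟩
      exact (Finset.mem_filter.1 this).2
    · have : k ∈ ({l ∈ A.erase i | p ^ v ∣ a l} : Finset κ) := by rw [hk]; simp
      exact Finset.mem_of_mem_erase (Finset.mem_filter.1 this).1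
  push Not at hall
  obtain ⟨j₀, hj₀, hno⟩ := hall
  obtain ⟨p, v, hp, hv, hpa, hD3, hpd, k, hk, hkK⟩ := miss j₀ hj₀ hno
  obtain ⟨j₁, hj₁, hkj₁⟩ := R.exists_home hk (ha k hk)
  have h01 : j₁ ≠ j₀ := by
    rintro rfl
    exact hno k hk hkj₁
  obtain ⟨j₂, hj₂'⟩ : (D \ {j₀, j₁}).Nonempty := by
    rw [← Finset.card_pos]
    have := Finset.le_card_sdiff {j₀, j₁} D
    rw [Finset.card_pair h01.symm] at this
    omega
  simp only [Finset.mem_sdiff, Finset.mem_insert, Finset.mem_singleton, not_or] at hj₂'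
  obtain ⟨hj₂, h20, h21⟩ := hj₂'
  have hdrop := count_le_of_single hkK hj₁ hkj₁ (Ne.symm h21)
  by_cases hbig : 2 * a i ≤ d j₂
  · exact one i hi p v hp hv j₂ hj₂ (hpd j₂ hj₂ h20) hbig hdrop
  -- Now `j₂` is divisible by no weight either. Dividing only `d j₂` by a prime might lower the sum
  -- too little, so `d j₀` is divided as well.
  have hno₂ : ∀ k ∈ A, ¬ a k ∣ d j₂ := fun k hk h => by
    have := home j₂ hj₂ k hk h
    have := hmin k hk
    omega
  obtain ⟨p', v', hp', hv', hpa', -, hpd', k', hk', hkK'⟩ := miss j₂ hj₂ hno₂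
  obtain ⟨j, hj, hkj⟩ := R.exists_home hk' (ha k' hk')
  have hj0 : j ≠ j₀ := by
    rintro rfl
    exact hno k' hk' hkj
  have hj2 : j ≠ j₂ := by
    rintro rfl
    exact hno₂ k' hk' hkj
  have R1 := (R.erase i).drop hp (hpd j₂ hj₂ h20) hdrop
  have pos1 := pos d j₂ p v hd hp hv hj₂ (hpd j₂ hj₂ h20)
  have sum1 := sum_update_add (d := d) j₂ hj₂ (d j₂ / p)
  set e := Function.update d j₂ (d j₂ / p) with he
  have hej : e j = d j := Function.update_of_ne hj2 _ _
  have hej0 : e j₀ = d j₀ := Function.update_of_ne (Ne.symm h20) _ _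
  have hpe : p' ^ v' ∣ e j₀ := by
    rw [hej0]
    exact hpd' j₀ hj₀ (Ne.symm h20)
  refine ⟨i, hi, _, R1.drop hp' hpe (count_le_of_single hkK' hj (hej ▸ hkj) hj0),
    pos e j₀ p' v' pos1 hp' hv' hj₀ hpe, ?_⟩
  have sum2 := sum_update_add (d := e) j₀ hj₀ (e j₀ / p')
  have half1 := half_le_sub_div (n := d j₂) hp
  have half2 := half_le_sub_div (n := e j₀) hp'
  have hsq := R.mul_self_le hd ha hK (by omega) hj₀ hj₂ (Ne.symm h20) hD3 hmin
  -- by the inequality of arithmetic and geometric means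
  have hsum : 2 * a i ≤ d j₀ + d j₂ := by
    zify at hsq ⊢
    nlinarith [sq_nonneg ((d j₀ : ℤ) - d j₂)]
  omega

end

/-! ### The bound for at most three degrees -/

theorem CountReg.erase_tight {ι κ : Type*} [DecidableEq ι] [DecidableEq κ] {D : Finset ι}
    {d : ι → ℕ} {A : Finset κ} {a : κ → ℕ} (R : CountReg D d A a) {j : ι} (hj : j ∈ D) {k : κ}
    (hk : k ∈ A) (h : d j = a k) : CountReg (D.erase j) d (A.erase k) a := by
  intro g hg
  have := R g hg
  rw [Finset.filter_erase, Finset.filter_erase]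
  by_cases hgk : g ∣ a k
  · rw [Finset.card_erase_of_mem (Finset.mem_filter.2 ⟨hk, hgk⟩),
      Finset.card_erase_of_mem (Finset.mem_filter.2 ⟨hj, h ▸ hgk⟩)]
    omega
  · rw [Finset.erase_eq_of_notMem (s := {i ∈ A | g ∣ a i}) fun hm =>
        hgk (Finset.mem_filter.1 hm).2,
      Finset.erase_eq_of_notMem (s := {j ∈ D | g ∣ d j}) fun hm =>
        hgk (h ▸ (Finset.mem_filter.1 hm).2)]
    exact this

/-- Every integer above the amplitude lies in every semigroup containing the weights. The induction
on the number of weights cancels equal weights and degrees, and removes surplus weights. -/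
theorem CountReg.mem_of_delta_lt {ι κ : Type*} {D : Finset ι} {d : ι → ℕ} {A : Finset κ}
    {a : κ → ℕ} (R : CountReg D d A a) (hD : #D ≤ 3) (hA : #D + 1 ≤ #A) (ha : ∀ i ∈ A, 2 ≤ a i)
    (hd : ∀ j ∈ D, 0 < d j) (S : AddSubmonoid ℤ) (hS : ∀ i ∈ A, (a i : ℤ) ∈ S) (z : ℤ)
    (hz : deltaOn D d A a < z) : z ∈ S := by
  classical
  induction hn : #A generalizing D A d with
  | zero => omega
  | succ n ih =>
    have sub : ∀ i, ∀ k ∈ A.erase i, k ∈ A := fun i k hk => Finset.mem_of_mem_erase hk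
    by_cases ht : ∀ j ∈ D, ∀ k ∈ A, d j ≠ a k
    swap
    · push Not at ht
      obtain ⟨j, hj, k, hk, h⟩ := ht
      have c1 := Finset.card_erase_of_mem hj
      have c2 := Finset.card_erase_of_mem hk
      refine ih (R.erase_tight hj hk h) (by omega) (by have := Finset.card_pos.2 ⟨j, hj⟩; omega)
        (fun i hi => ha i (sub _ i hi))
        (fun i hi => hd i (Finset.mem_of_mem_erase hi)) (fun i hi => hS i (sub _ i hi)) ?_
        (by omega)
      simp only [deltaOn] at hz ⊢
      rw [← Finset.add_sum_erase D _ hj, ← Finset.add_sum_erase A _ hk, h] at hz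
      linarith
    by_cases hA2 : #A = #D + 1
    · exact mem_of_card_eq R hD hA2 (fun i hi => by have := ha i hi; omega) hd S hS z hz
    obtain ⟨i, hi, d', R', hd', hsum⟩ := R.exists_removal hD (by omega) ha hd ht
    have c := Finset.card_erase_of_mem hi
    refine ih R' hD (by omega) (fun k hk => ha k (sub _ k hk)) hd'
      (fun k hk => hS k (sub _ k hk)) ?_ (by omega)
    simp only [deltaOn] at hz ⊢
    rw [← Finset.add_sum_erase A _ hi] at hz
    have : ((∑ j ∈ D, d' j + a i : ℕ) : ℤ) ≤ (∑ j ∈ D, d j : ℕ) := by exact_mod_cast hsum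
    push_cast at this
    linarith

/-- The integers that are non-negative integer combinations of the weights. -/
def combinations {κ : Type*} [Fintype κ] (a : κ → ℕ) : AddSubmonoid ℤ where
  carrier := {z | ∃ x : κ → ℕ, ((∑ i, x i * a i : ℕ) : ℤ) = z}
  zero_mem' := ⟨0, by simp⟩
  add_mem' := by
    rintro _ _ ⟨x, rfl⟩ ⟨y, rfl⟩
    exact ⟨x + y, by simp [add_mul, Finset.sum_add_distrib]⟩

theorem mem_combinations {κ : Type*} [Fintype κ] [DecidableEq κ] (a : κ → ℕ) (i : κ) :
    (a i : ℤ) ∈ combinations a :=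
  ⟨Pi.single i 1, by simp [Pi.single_apply]⟩

/-- **Corollary (bound on Frobenius numbers via regular pairs).**
Let `a₀,…,aₙ` be coprime positive integers with `aᵢ ≥ 2` for all `i`.  Then
`F(a₀,…,aₙ) ≤ δ(d;a)` for every regular pair `(d;a)` with these weights such that
`c ≤ 3` and `n ≥ c`. -/
theorem frobenius_le_delta_of_regular_pair (n : ℕ) (a : Fin (n + 1) → ℕ)
    (ha : ∀ i, 2 ≤ a i) (hcop : Finset.univ.gcd a = 1) :
    ∀ (c : ℕ), 1 ≤ c → c ≤ 3 → c ≤ n →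
      ∀ d : Fin c → ℕ, (∀ j, 0 < d j) → IsHRegularPair 1 d a →
        frobNum 1 a ≤ deltaPair d a := by
  intro c _ hc3 hcn d hd R
  -- `-1` is not a combination, so the supremum is over a nonempty set
  refine csSup_le ⟨-1, by simp [hcop], ?_⟩ ?_
  · rintro ⟨x, hx⟩
    have : (0 : ℤ) ≤ ((∑ i, x i * a i : ℕ) : ℤ) := Int.natCast_nonneg _
    omega
  · rintro z ⟨-, hz⟩
    by_contra! hlt
    exact hz ((IsHRegularOn.countReg R fun i _ => by have := ha i; omega).mem_of_delta_lt
      (by simpa using hc3) (by simpa using hcn) (fun i _ => ha i) (fun j _ => hd j)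
      (combinations a) (fun i _ => mem_combinations a i) z hlt)
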